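/- arXiv:1711.06603 — 5 statements merged into one kernel-verified Lean document; each statement's English description precedes it below -/
import Mathlib

section
/- Let t > 0 and y < z be real numbers. Let f : [0,t] × [y,z] → ℝ be continuous with continuous partial derivative ∂ₓf, and let g : [0,t] × [y,z] → ℝ be such that ∂ₓg and ∂ₓₓg exist and are continuous. Then ∫₀ᵗ ∫_y^z sign(f(τ,x)) · ( ∂ₓf(τ,x) ∂ₓg(τ,x) + f(τ,x) ∂ₓₓg(τ,x) ) dx dτ = ∫₀ᵗ [ |f(τ,z)| ∂ₓg(τ,z) − |f(τ,y)| ∂ₓg(τ,y) ] dτ, where sign(r) = 1 for r > 0, −1 for r < 0, and 0 for r = 0. -/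
open Set MeasureTheory intervalIntegral

/-!
For each fixed time the identity for the inner integral is the fundamental theorem of calculus
applied to `|F| * G`, where `F = f τ` and `G = ∂ₓg τ`. At a point with `F x ≠ 0`, or with
`F x = 0` and `F' x = 0`, the function `|F|` is differentiable with derivative `sign (F x) * F' x`.
The remaining points are zeros of `F` at which `F'` does not vanish. Such zeros are isolated, hence
at most countable, and the fundamental theorem of calculus tolerates a countable exceptional set
because `|F| * G` is continuous and the candidate derivative is integrable (a bounded measurable
function times a continuous one).
-/

lemma measurable_real_sign : Measurable Real.sign := by
  unfold Real.sign
  exact Measurable.ite measurableSet_Iio measurable_const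
    (Measurable.ite measurableSet_Ioi measurable_const measurable_const)

lemma abs_real_sign_le_one (r : ℝ) : |Real.sign r| ≤ 1 := by
  rcases Real.sign_apply_eq r with h | h | h <;> simp [h]

lemma real_sign_mul_self (r : ℝ) : Real.sign r * r = |r| := by
  rcases lt_trichotomy r 0 with h | rfl | h
  · rw [Real.sign_of_neg h, abs_of_neg h, neg_one_mul]
  · simp
  · rw [Real.sign_of_pos h, abs_of_pos h, one_mul]

/-- `|F|` is differentiable at `x` unless `x` is a simple zero of `F`. -/
lemma hasDerivAt_abs_comp_sign {F : ℝ → ℝ} {F' x : ℝ} (h : HasDerivAt F F' x)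
    (h0 : F x = 0 → F' = 0) :
    HasDerivAt (fun s => |F s|) (Real.sign (F x) * F') x := by
  rcases lt_trichotomy (F x) 0 with hx | hx | hx
  · rw [Real.sign_of_neg hx]
    exact (hasDerivAt_abs_neg hx).comp x h
  · have hF' := h0 hx
    subst hF'
    rw [mul_zero]
    -- Since `F x = F' x = 0`, `F s = o(s - x)`, and this passes to `|F s|`.
    rw [hasDerivAt_iff_isLittleO] at h ⊢
    simpa [hx] using h
  · rw [Real.sign_of_pos hx]
    exact (hasDerivAt_abs_pos hx).comp x h

lemma countable_simple_zeros {F F' : ℝ → ℝ} {a b : ℝ}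
    (h : ∀ x ∈ Ioo a b, HasDerivAt F (F' x) x) :
    {x | x ∈ Ioo a b ∧ F x = 0 ∧ F' x ≠ 0}.Countable := by
  set S := {x | x ∈ Ioo a b ∧ F x = 0 ∧ F' x ≠ 0}
  have hS : IsDiscrete S := by
    rw [isDiscrete_iff_nhdsNE]
    rintro x ⟨hx, -, hx'⟩
    rw [← Filter.empty_mem_iff_bot, Filter.mem_inf_principal]
    filter_upwards [(h x hx).eventually_ne (c := 0) hx'] with s hs hsS
    exact hs hsS.2.1
  exact (HereditarilyLindelofSpace.isLindelof S).countable_of_isDiscrete hS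

/-- The one-dimensional identity `∫ sign F * (F G)' = [|F| G]`. -/
lemma integral_sign_mul_deriv {F F' G G' : ℝ → ℝ} {a b : ℝ} (hab : a ≤ b)
    (hF : ∀ x ∈ Icc a b, HasDerivWithinAt F (F' x) (Icc a b) x)
    (hG : ∀ x ∈ Icc a b, HasDerivWithinAt G (G' x) (Icc a b) x)
    (hF' : ContinuousOn F' (Icc a b)) (hG' : ContinuousOn G' (Icc a b)) :
    (∫ x in a..b, Real.sign (F x) * (F' x * G x + F x * G' x))
      = |F b| * G b - |F a| * G a := by
  have hFc : ContinuousOn F (Icc a b) := fun x hx => (hF x hx).continuousWithinAt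
  have hGc : ContinuousOn G (Icc a b) := fun x hx => (hG x hx).continuousWithinAt
  have hFd : ∀ x ∈ Ioo a b, HasDerivAt F (F' x) x := fun x hx =>
    (hF x (Ioo_subset_Icc_self hx)).hasDerivAt (Icc_mem_nhds hx.1 hx.2)
  have hGd : ∀ x ∈ Ioo a b, HasDerivAt G (G' x) x := fun x hx =>
    (hG x (Ioo_subset_Icc_self hx)).hasDerivAt (Icc_mem_nhds hx.1 hx.2)
  refine integral_eq_of_hasDerivAt_off_countable_of_le (fun x => |F x| * G x) _ hab
    (countable_simple_zeros hFd) (hFc.abs.mul hGc) ?_ ?_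
  · rintro x ⟨hx, hxS⟩
    have h0 : F x = 0 → F' x = 0 := fun h => by
      by_contra h'
      exact hxS ⟨hx, h, h'⟩
    refine ((hasDerivAt_abs_comp_sign (hFd x hx) h0).mul (hGd x hx)).congr_deriv ?_
    rw [← real_sign_mul_self]
    ring
  · rw [intervalIntegrable_iff_integrableOn_Icc_of_le hab]
    have hcont : IntegrableOn (fun x => F' x * G x + F x * G' x) (Icc a b) :=
      ((hF'.mul hGc).add (hFc.mul hG')).integrableOn_Icc
    exact hcont.bdd_mul (c := 1)
      (measurable_real_sign.comp_aemeasurable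
        (hFc.aemeasurable measurableSet_Icc)).aestronglyMeasurable
      (Filter.Eventually.of_forall fun x => abs_real_sign_le_one (F x))

/-- Lemma 4.2 a), identity (4.7): for `t > 0`, `y < z`, `f` continuous on
`[0,t] × [y,z]` with continuous spatial derivative `fx = ∂ₓf`, and `g` with
continuous spatial derivatives `gx = ∂ₓg` and `gxx = ∂ₓₓg`,
`∫₀ᵗ∫_y^z sign(f) ∂ₓ(f ∂ₓg) = ∫₀ᵗ [ |f| ∂ₓg ]_{x=y}^{x=z}`. -/
theorem sign_integration_by_parts
    (t y z : ℝ) (ht : 0 < t) (hyz : y < z)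
    (f fx g gx gxx : ℝ → ℝ → ℝ)
    (hf : ContinuousOn (fun p : ℝ × ℝ => f p.1 p.2) (Icc 0 t ×ˢ Icc y z))
    (hfx : ContinuousOn (fun p : ℝ × ℝ => fx p.1 p.2) (Icc 0 t ×ˢ Icc y z))
    (hgx : ContinuousOn (fun p : ℝ × ℝ => gx p.1 p.2) (Icc 0 t ×ˢ Icc y z))
    (hgxx : ContinuousOn (fun p : ℝ × ℝ => gxx p.1 p.2) (Icc 0 t ×ˢ Icc y z))
    (hdf : ∀ τ ∈ Icc (0:ℝ) t, ∀ x ∈ Icc y z,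
      HasDerivWithinAt (fun s => f τ s) (fx τ x) (Icc y z) x)
    (hdg : ∀ τ ∈ Icc (0:ℝ) t, ∀ x ∈ Icc y z,
      HasDerivWithinAt (fun s => g τ s) (gx τ x) (Icc y z) x)
    (hdgx : ∀ τ ∈ Icc (0:ℝ) t, ∀ x ∈ Icc y z,
      HasDerivWithinAt (fun s => gx τ s) (gxx τ x) (Icc y z) x) :
    (∫ τ in (0:ℝ)..t, ∫ x in y..z,
        Real.sign (f τ x) * (fx τ x * gx τ x + f τ x * gxx τ x))
      = ∫ τ in (0:ℝ)..t, (|f τ z| * gx τ z - |f τ y| * gx τ y) := by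
  refine integral_congr fun τ hτ => ?_
  rw [uIcc_of_le ht.le] at hτ
  -- Restriction of a jointly continuous function to the slice at time `τ`.
  have slice : ∀ u : ℝ → ℝ → ℝ,
      ContinuousOn (fun p : ℝ × ℝ => u p.1 p.2) (Icc 0 t ×ˢ Icc y z) →
      ContinuousOn (u τ) (Icc y z) := fun u hu =>
    hu.comp (f := fun x => (τ, x)) (by fun_prop) fun x hx => ⟨hτ, hx⟩
  exact integral_sign_mul_deriv hyz.le (hdf τ hτ) (hdgx τ hτ) (slice fx hfx) (slice gxx hgxx)
end

section
/- Let V₀ : ℝ → ℝ be of class C², V₁ : ℝ → ℝ be of class C¹, and w : [0,∞) × ℝ → ℝ be continuous with continuous partial derivative ∂ₓw. Define S(t,x) = ½ ( V₀(x+t) + V₀(x−t) ) + ½ ∫_{x−t}^{x+t} V₁(s) ds + ½ ∫₀ᵗ ∫_{x−(t−τ)}^{x+(t−τ)} w(τ,ξ) dξ dτ. Then S is twice continuously differentiable on (0,∞) × ℝ and satisfies ∂ₜₜS(t,x) − ∂ₓₓS(t,x) = w(t,x) for all (t,x) ∈ (0,∞) × ℝ, together with the initial conditions S(0,x) = V₀(x)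 and ∂ₜS(0,x) = V₁(x) for all x ∈ ℝ. -/
/-!
The solution splits along the two families of characteristics. With `F(τ, y) = ∫₀^y w(τ, ξ) dξ`,
the Duhamel integral is `A(t, x + t) - B(t, x - t)`, where `A(t, y) = ∫₀ᵗ F(τ, y - τ) dτ` and
`B(t, y) = ∫₀ᵗ F(τ, y + τ) dτ`. The functions `A` and `B` need not be `C²`, because `F` need not be
differentiable in time; but their time derivatives, taken at `(t, x + t)` and `(t, x - t)`, are both
`F(t, x)` and cancel. Hence
`∂ₜS = p(t, x + t) - q(t, x - t)` and `∂ₓS = p(t, x + t) + q(t, x - t)`, where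
`p = (V₀' + V₁ + ∫₀ᵗ w(τ, y - τ) dτ) / 2` and `q = (V₀' - V₁ - ∫₀ᵗ w(τ, y + τ) dτ) / 2`
(`riemannInv` with `σ = 1` and `σ = -1`). Both are `C¹` by the Leibniz rule, as `∂ₓw` is continuous,
so `S` is `C²`. In `∂ₜₜS - ∂ₓₓS` the `y`-derivatives of `p` and `q` cancel, and what is left is
`∂ₜp - ∂ₜq = w / 2 + w / 2`.

The argument is carried out for `w` defined on the whole plane; freezing `w` at its values at time
`0` for negative times reduces the half-plane case to this one.
-/

open Set MeasureTheory intervalIntegral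

/-! ### Functions with prescribed partial derivatives -/

/-- The linear form `(τ, ξ) ↦ a τ + b ξ` on `ℝ × ℝ`, i.e. the differential of a function of
`(t, x)` whose partial derivatives are `a` and `b`. -/
noncomputable def gradForm (a b : ℝ) : ℝ × ℝ →L[ℝ] ℝ :=
  a • ContinuousLinearMap.fst ℝ ℝ ℝ + b • ContinuousLinearMap.snd ℝ ℝ ℝ

theorem hasFDerivAt_of_partials {f ft fx : ℝ → ℝ → ℝ}
    (ht : ∀ t x, HasDerivAt (fun s => f s x) (ft t x) t)
    (hx : ∀ t x, HasDerivAt (fun y => f t y) (fx t x) x)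
    (ct : Continuous fun p : ℝ × ℝ => ft p.1 p.2)
    (cx : Continuous fun p : ℝ × ℝ => fx p.1 p.2) (p : ℝ × ℝ) :
    HasFDerivAt (fun p : ℝ × ℝ => f p.1 p.2) (gradForm (ft p.1 p.2) (fx p.1 p.2)) p := by
  have h := hasStrictFDerivAt_uncurry_coprod (𝕜 := ℝ) (u := p) (f := f)
    (f₁ := fun t x => ContinuousLinearMap.toSpanSingleton ℝ (ft t x))
    (f₂ := fun t x => ContinuousLinearMap.toSpanSingleton ℝ (fx t x))
    (Filter.Eventually.of_forall fun v => (ht v.1 v.2).hasFDerivAt)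
    (Filter.Eventually.of_forall fun v => (hx v.1 v.2).hasFDerivAt)
    (((ContinuousLinearMap.toSpanSingletonCLE (𝕜 := ℝ) (E := ℝ)).continuous.comp ct).continuousAt)
    (((ContinuousLinearMap.toSpanSingletonCLE (𝕜 := ℝ) (E := ℝ)).continuous.comp cx).continuousAt)
  refine h.hasFDerivAt.congr_fderiv ?_
  ext <;> simp [gradForm, Function.HasUncurry.uncurry]

theorem hasDerivAt_comp_curve {f : ℝ × ℝ → ℝ} {a b : ℝ} {g h : ℝ → ℝ} {g' h' s : ℝ}
    (hf : HasFDerivAt f (gradForm a b) (g s, h s))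
    (hg : HasDerivAt g g' s) (hh : HasDerivAt h h' s) :
    HasDerivAt (fun s => f (g s, h s)) (a * g' + b * h') s := by
  have := hf.comp_hasDerivAt s (hg.prodMk hh)
  simpa [gradForm] using! this

theorem contDiff_succ_of_gradForm {f : ℝ × ℝ → ℝ} {ft fx : ℝ × ℝ → ℝ} (n : ℕ)
    (hf : ∀ p, HasFDerivAt f (gradForm (ft p) (fx p)) p)
    (ct : ContDiff ℝ n ft) (cx : ContDiff ℝ n fx) : ContDiff ℝ (n + 1) f := by
  refine contDiff_succ_iff_hasFDerivAt.2 ⟨fun p => gradForm (ft p) (fx p), ?_, hf⟩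
  exact (ct.smul contDiff_const).add (cx.smul contDiff_const)

/-! ### Parametric integrals -/

/-- Differentiation under the integral sign over a fixed interval; local boundedness of `Gy`
comes from compactness. -/
theorem hasDerivAt_integral_param {G Gy : ℝ → ℝ → ℝ}
    (cG : Continuous fun p : ℝ × ℝ => G p.1 p.2)
    (cGy : Continuous fun p : ℝ × ℝ => Gy p.1 p.2)
    (hG : ∀ τ y, HasDerivAt (fun y => G τ y) (Gy τ y) y) (t y : ℝ) :
    HasDerivAt (fun y => ∫ τ in (0:ℝ)..t, G τ y) (∫ τ in (0:ℝ)..t, Gy τ y) y := by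
  obtain ⟨C, hC⟩ := ((isCompact_uIcc (a := (0:ℝ)) (b := t)).prod
    (isCompact_closedBall y 1)).exists_bound_of_continuousOn cGy.continuousOn
  have cont : ∀ {H : ℝ → ℝ → ℝ}, (Continuous fun p : ℝ × ℝ => H p.1 p.2) →
      ∀ y, Continuous fun τ => H τ y := fun hH y =>
    hH.comp (by fun_prop : Continuous fun τ : ℝ => (τ, y))
  refine (intervalIntegral.hasDerivAt_integral_of_dominated_loc_of_deriv_le (F := fun y τ => G τ y)
    (F' := fun y τ => Gy τ y) (bound := fun _ => C) (Metric.closedBall_mem_nhds y one_pos)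
    (Filter.Eventually.of_forall fun z => (cont cG z).aestronglyMeasurable)
    ((cont cG y).intervalIntegrable _ _) (cont cGy y).aestronglyMeasurable
    (Filter.Eventually.of_forall fun τ hτ z hz => hC (τ, z) ⟨uIoc_subset_uIcc hτ, hz⟩)
    intervalIntegrable_const (Filter.Eventually.of_forall fun τ _ z _ => hG τ z)).2

theorem continuous_integral_param {H : ℝ → ℝ → ℝ}
    (cH : Continuous fun p : ℝ × ℝ => H p.1 p.2) :
    Continuous fun p : ℝ × ℝ => ∫ τ in (0:ℝ)..p.1, H τ p.2 :=
  continuous_parametric_intervalIntegral_of_continuous (f := fun (p : ℝ × ℝ) τ => H τ p.2)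
    (cH.comp (by fun_prop : Continuous fun q : (ℝ × ℝ) × ℝ => (q.2, q.1.2))) continuous_fst

/-- The Leibniz rule for an integral whose upper limit and integrand both vary. -/
theorem hasFDerivAt_integral_param {G Gy : ℝ → ℝ → ℝ}
    (cG : Continuous fun p : ℝ × ℝ => G p.1 p.2)
    (cGy : Continuous fun p : ℝ × ℝ => Gy p.1 p.2)
    (hG : ∀ τ y, HasDerivAt (fun y => G τ y) (Gy τ y) y) (p : ℝ × ℝ) :
    HasFDerivAt (fun p : ℝ × ℝ => ∫ τ in (0:ℝ)..p.1, G τ p.2)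
      (gradForm (G p.1 p.2) (∫ τ in (0:ℝ)..p.1, Gy τ p.2)) p := by
  refine hasFDerivAt_of_partials (f := fun t y => ∫ τ in (0:ℝ)..t, G τ y) (ft := G)
    (fx := fun t y => ∫ τ in (0:ℝ)..t, Gy τ y) (fun t y => ?_)
    (hasDerivAt_integral_param cG cGy hG) cG (continuous_integral_param cGy) p
  have c : Continuous fun τ => G τ y := cG.comp (by fun_prop : Continuous fun τ : ℝ => (τ, y))
  exact integral_hasDerivAt_right (c.intervalIntegrable _ _)
    (c.stronglyMeasurableAtFilter _ _) c.continuousAt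

/-! ### Integrals of the source along characteristics -/

/-- The integral of `w` up to time `t` along the characteristic line `ξ = y + ε τ`. -/
noncomputable def charInt (w : ℝ → ℝ → ℝ) (ε t y : ℝ) : ℝ := ∫ τ in (0:ℝ)..t, w τ (y + ε * τ)

/-- The spatial primitive of `w` vanishing at `0`. -/
noncomputable def spacePrim (w : ℝ → ℝ → ℝ) (τ y : ℝ) : ℝ := ∫ ξ in (0:ℝ)..y, w τ ξ

section
variable {w wx : ℝ → ℝ → ℝ}

theorem hasFDerivAt_charInt (cw : Continuous fun p : ℝ × ℝ => w p.1 p.2)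
    (cwx : Continuous fun p : ℝ × ℝ => wx p.1 p.2)
    (hw : ∀ τ y, HasDerivAt (fun y => w τ y) (wx τ y) y) (ε : ℝ) (p : ℝ × ℝ) :
    HasFDerivAt (fun p : ℝ × ℝ => charInt w ε p.1 p.2)
      (gradForm (w p.1 (p.2 + ε * p.1)) (charInt wx ε p.1 p.2)) p := by
  have c : Continuous fun p : ℝ × ℝ => (p.1, p.2 + ε * p.1) := by fun_prop
  exact hasFDerivAt_integral_param (G := fun τ y => w τ (y + ε * τ))
    (Gy := fun τ y => wx τ (y + ε * τ)) (cw.comp c) (cwx.comp c)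
    (fun τ y => (hw τ _).comp_add_const y (ε * τ)) p

theorem continuous_spacePrim (cw : Continuous fun p : ℝ × ℝ => w p.1 p.2) :
    Continuous fun p : ℝ × ℝ => spacePrim w p.1 p.2 :=
  continuous_parametric_intervalIntegral_of_continuous (f := fun (p : ℝ × ℝ) ξ => w p.1 ξ)
    (cw.comp (by fun_prop : Continuous fun q : (ℝ × ℝ) × ℝ => (q.1.1, q.2))) continuous_snd

theorem hasDerivAt_spacePrim (cw : Continuous fun p : ℝ × ℝ => w p.1 p.2) (τ y : ℝ) :
    HasDerivAt (fun y => spacePrim w τ y) (w τ y) y := by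
  have c : Continuous fun ξ => w τ ξ := cw.comp (by fun_prop : Continuous fun ξ : ℝ => (τ, ξ))
  exact integral_hasDerivAt_right (c.intervalIntegrable _ _)
    (c.stronglyMeasurableAtFilter _ _) c.continuousAt

theorem contDiff_charInt (cw : Continuous fun p : ℝ × ℝ => w p.1 p.2)
    (cwx : Continuous fun p : ℝ × ℝ => wx p.1 p.2)
    (hw : ∀ τ y, HasDerivAt (fun y => w τ y) (wx τ y) y) (ε : ℝ) :
    ContDiff ℝ 1 (fun p : ℝ × ℝ => charInt w ε p.1 p.2) := by
  have h := contDiff_succ_of_gradForm 0 (hasFDerivAt_charInt cw cwx hw ε)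
    (contDiff_zero.2 (cw.comp (by fun_prop : Continuous fun p : ℝ × ℝ => (p.1, p.2 + ε * p.1))))
    (contDiff_zero.2 (continuous_integral_param (H := fun τ y => wx τ (y + ε * τ))
      (cwx.comp (by fun_prop : Continuous fun p : ℝ × ℝ => (p.1, p.2 + ε * p.1)))))
  simpa using h

end

/-! ### The wave equation with a source on the whole plane -/

/-- The d'Alembert formula for data defined on all of `ℝ × ℝ`, written with the integrals over
characteristic triangles split into the parts depending on `x + t` and on `x - t`. -/
noncomputable def waveSol (V₀ V₁ : ℝ → ℝ) (w : ℝ → ℝ → ℝ) (t x : ℝ) : ℝ :=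
  (V₀ (x + t) + (∫ s in (0:ℝ)..(x + t), V₁ s) + charInt (spacePrim w) (-1) t (x + t)) / 2
  + (V₀ (x - t) - (∫ s in (0:ℝ)..(x - t), V₁ s) - charInt (spacePrim w) 1 t (x - t)) / 2

/-- The Riemann invariants of the wave equation: for `σ = 1` this is `(∂ₓS + ∂ₜS) / 2` as a function
of `(t, y)` with `y = x + t`; for `σ = -1` it is `(∂ₓS - ∂ₜS) / 2` with `y = x - t`. -/
noncomputable def riemannInv (V₀ V₁ : ℝ → ℝ) (w : ℝ → ℝ → ℝ) (σ t y : ℝ) : ℝ :=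
  (deriv V₀ y + σ * V₁ y + σ * charInt w (-σ) t y) / 2

section
variable {V₀ V₁ : ℝ → ℝ} {w wx : ℝ → ℝ → ℝ}

/-- The two summands of `waveSol` (for `σ = 1` and `σ = -1`), as functions of time and of the
characteristic coordinate `y = x + σ t`. -/
theorem hasFDerivAt_half (hV₀ : ContDiff ℝ 2 V₀) (hV₁ : ContDiff ℝ 1 V₁)
    (cw : Continuous fun p : ℝ × ℝ => w p.1 p.2) (σ : ℝ) (p : ℝ × ℝ) :
    HasFDerivAt (fun p : ℝ × ℝ =>
        (V₀ p.2 + σ * (∫ s in (0:ℝ)..p.2, V₁ s) + σ * charInt (spacePrim w) (-σ) p.1 p.2) / 2)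
      (gradForm (σ * spacePrim w p.1 (p.2 - σ * p.1) / 2) (riemannInv V₀ V₁ w σ p.1 p.2)) p := by
  have h0 : HasDerivAt V₀ (deriv V₀ p.2) p.2 :=
    (hV₀.differentiable (by norm_num)).differentiableAt.hasDerivAt
  have h1 : HasDerivAt (fun y => ∫ s in (0:ℝ)..y, V₁ s) (V₁ p.2) p.2 :=
    integral_hasDerivAt_right (hV₁.continuous.intervalIntegrable _ _)
      (hV₁.continuous.stronglyMeasurableAtFilter _ _) hV₁.continuous.continuousAt
  have h2 := hasFDerivAt_charInt (continuous_spacePrim cw) cw (hasDerivAt_spacePrim cw) (-σ) p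
  have h3 := (((h0.add (h1.const_mul σ)).comp_hasFDerivAt p hasFDerivAt_snd).add
    (h2.const_mul σ)).mul_const (2⁻¹)
  refine (h3.congr_fderiv ?_).congr_of_eventuallyEq
    (Filter.Eventually.of_forall fun q => ?_)
  · ext <;> simp [gradForm, riemannInv, div_eq_inv_mul, sub_eq_add_neg]; ring
  · simp [div_eq_mul_inv]

theorem contDiff_riemannInv (hV₀ : ContDiff ℝ 2 V₀) (hV₁ : ContDiff ℝ 1 V₁)
    (cw : Continuous fun p : ℝ × ℝ => w p.1 p.2)
    (cwx : Continuous fun p : ℝ × ℝ => wx p.1 p.2)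
    (hw : ∀ τ y, HasDerivAt (fun y => w τ y) (wx τ y) y) (σ : ℝ) :
    ContDiff ℝ 1 (fun p : ℝ × ℝ => riemannInv V₀ V₁ w σ p.1 p.2) := by
  have h0 : ContDiff ℝ 1 (deriv V₀) := by
    rw [show (2 : WithTop ℕ∞) = 1 + 1 by norm_num] at hV₀
    exact (contDiff_succ_iff_deriv.1 hV₀).2.2
  have h2 := contDiff_charInt cw cwx hw (-σ)
  unfold riemannInv
  exact (((h0.comp contDiff_snd).add (contDiff_const.mul (hV₁.comp contDiff_snd))).add
    (contDiff_const.mul h2)).div_const 2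

/-- `∂ₜ` of a Riemann invariant is `± w / 2`, evaluated on the characteristic. The
`y`-derivative `d` is left unspecified, since it cancels from the wave operator. -/
theorem exists_hasFDerivAt_riemannInv (hV₀ : ContDiff ℝ 2 V₀) (hV₁ : ContDiff ℝ 1 V₁)
    (cw : Continuous fun p : ℝ × ℝ => w p.1 p.2)
    (cwx : Continuous fun p : ℝ × ℝ => wx p.1 p.2)
    (hw : ∀ τ y, HasDerivAt (fun y => w τ y) (wx τ y) y) (σ : ℝ) (p : ℝ × ℝ) :
    ∃ d, HasFDerivAt (fun p : ℝ × ℝ => riemannInv V₀ V₁ w σ p.1 p.2)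
      (gradForm (σ * w p.1 (p.2 - σ * p.1) / 2) d) p := by
  have h0 : HasDerivAt (deriv V₀) (deriv (deriv V₀) p.2) p.2 := by
    rw [show (2 : WithTop ℕ∞) = 1 + 1 by norm_num] at hV₀
    exact ((contDiff_succ_iff_deriv.1 hV₀).2.2.differentiable
      (by norm_num)).differentiableAt.hasDerivAt
  have h1 : HasDerivAt V₁ (deriv V₁ p.2) p.2 :=
    (hV₁.differentiable (by norm_num)).differentiableAt.hasDerivAt
  have h2 := hasFDerivAt_charInt cw cwx hw (-σ) p
  have h3 := (((h0.add (h1.const_mul σ)).comp_hasFDerivAt p hasFDerivAt_snd).add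
    (h2.const_mul σ)).mul_const (2⁻¹)
  refine ⟨(deriv (deriv V₀) p.2 + σ * deriv V₁ p.2 + σ * charInt wx (-σ) p.1 p.2) / 2,
    (h3.congr_fderiv ?_).congr_of_eventuallyEq (Filter.Eventually.of_forall fun q => ?_)⟩
  · ext <;> simp [gradForm, div_eq_inv_mul, sub_eq_add_neg]; ring
  · simp [riemannInv, div_eq_mul_inv]

theorem hasDerivAt_waveSol_time (hV₀ : ContDiff ℝ 2 V₀) (hV₁ : ContDiff ℝ 1 V₁)
    (cw : Continuous fun p : ℝ × ℝ => w p.1 p.2) (t x : ℝ) :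
    HasDerivAt (fun t => waveSol V₀ V₁ w t x)
      (riemannInv V₀ V₁ w 1 t (x + t) - riemannInv V₀ V₁ w (-1) t (x - t)) t := by
  have h1 := hasDerivAt_comp_curve (g := fun t => t) (h := fun t => x + t) (s := t)
    (hasFDerivAt_half hV₀ hV₁ cw 1 (t, x + t)) (hasDerivAt_id t) ((hasDerivAt_id t).const_add x)
  have h2 := hasDerivAt_comp_curve (g := fun t => t) (h := fun t => x - t) (s := t)
    (hasFDerivAt_half hV₀ hV₁ cw (-1) (t, x - t)) (hasDerivAt_id t) ((hasDerivAt_id t).const_sub x)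
  refine ((h1.add h2).congr_deriv ?_).congr_of_eventuallyEq
    (Filter.Eventually.of_forall fun q => ?_)
  · simp; ring
  · simp [waveSol]; ring

theorem hasDerivAt_waveSol_space (hV₀ : ContDiff ℝ 2 V₀) (hV₁ : ContDiff ℝ 1 V₁)
    (cw : Continuous fun p : ℝ × ℝ => w p.1 p.2) (t x : ℝ) :
    HasDerivAt (fun x => waveSol V₀ V₁ w t x)
      (riemannInv V₀ V₁ w 1 t (x + t) + riemannInv V₀ V₁ w (-1) t (x - t)) x := by
  have h1 := hasDerivAt_comp_curve (g := fun _ => t) (h := fun x => x + t) (s := x)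
    (hasFDerivAt_half hV₀ hV₁ cw 1 (t, x + t)) (hasDerivAt_const x t)
    ((hasDerivAt_id x).add_const t)
  have h2 := hasDerivAt_comp_curve (g := fun _ => t) (h := fun x => x - t) (s := x)
    (hasFDerivAt_half hV₀ hV₁ cw (-1) (t, x - t)) (hasDerivAt_const x t)
    ((hasDerivAt_id x).sub_const t)
  refine ((h1.add h2).congr_deriv ?_).congr_of_eventuallyEq
    (Filter.Eventually.of_forall fun q => ?_)
  · simp
  · simp [waveSol]; ring

theorem contDiff_waveSol (hV₀ : ContDiff ℝ 2 V₀) (hV₁ : ContDiff ℝ 1 V₁)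
    (cw : Continuous fun p : ℝ × ℝ => w p.1 p.2)
    (cwx : Continuous fun p : ℝ × ℝ => wx p.1 p.2)
    (hw : ∀ τ y, HasDerivAt (fun y => w τ y) (wx τ y) y) :
    ContDiff ℝ 2 (fun p : ℝ × ℝ => waveSol V₀ V₁ w p.1 p.2) := by
  have hp : ContDiff ℝ 1 (fun p : ℝ × ℝ => riemannInv V₀ V₁ w 1 p.1 (p.2 + p.1)) :=
    (contDiff_riemannInv hV₀ hV₁ cw cwx hw 1).comp
      (by fun_prop : ContDiff ℝ 1 fun p : ℝ × ℝ => (p.1, p.2 + p.1))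
  have hq : ContDiff ℝ 1 (fun p : ℝ × ℝ => riemannInv V₀ V₁ w (-1) p.1 (p.2 - p.1)) :=
    (contDiff_riemannInv hV₀ hV₁ cw cwx hw (-1)).comp
      (by fun_prop : ContDiff ℝ 1 fun p : ℝ × ℝ => (p.1, p.2 - p.1))
  have h := contDiff_succ_of_gradForm 1
    (hasFDerivAt_of_partials (hasDerivAt_waveSol_time hV₀ hV₁ cw)
      (hasDerivAt_waveSol_space hV₀ hV₁ cw) (hp.sub hq).continuous (hp.add hq).continuous)
    (hp.sub hq) (hp.add hq)
  simpa [one_add_one_eq_two] using h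

theorem waveSol_wave_eq (hV₀ : ContDiff ℝ 2 V₀) (hV₁ : ContDiff ℝ 1 V₁)
    (cw : Continuous fun p : ℝ × ℝ => w p.1 p.2)
    (cwx : Continuous fun p : ℝ × ℝ => wx p.1 p.2)
    (hw : ∀ τ y, HasDerivAt (fun y => w τ y) (wx τ y) y) (t x : ℝ) :
    deriv (deriv fun s => waveSol V₀ V₁ w s x) t
      - deriv (deriv fun ξ => waveSol V₀ V₁ w t ξ) x = w t x := by
  rw [funext fun s => (hasDerivAt_waveSol_time hV₀ hV₁ cw s x).deriv,
    funext fun ξ => (hasDerivAt_waveSol_space hV₀ hV₁ cw t ξ).deriv]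
  obtain ⟨c, hc⟩ := exists_hasFDerivAt_riemannInv hV₀ hV₁ cw cwx hw 1 (t, x + t)
  obtain ⟨d, hd⟩ := exists_hasFDerivAt_riemannInv hV₀ hV₁ cw cwx hw (-1) (t, x - t)
  have ht := (hasDerivAt_comp_curve (g := fun t => t) (h := fun t => x + t) (s := t) hc
      (hasDerivAt_id t) ((hasDerivAt_id t).const_add x)).sub
    (hasDerivAt_comp_curve (g := fun t => t) (h := fun t => x - t) (s := t) hd
      (hasDerivAt_id t) ((hasDerivAt_id t).const_sub x))
  have hx := (hasDerivAt_comp_curve (g := fun _ => t) (h := fun x => x + t) (s := x) hc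
      (hasDerivAt_const x t) ((hasDerivAt_id x).add_const t)).add
    (hasDerivAt_comp_curve (g := fun _ => t) (h := fun x => x - t) (s := x) hd
      (hasDerivAt_const x t) ((hasDerivAt_id x).sub_const t))
  refine (congrArg₂ (· - ·) ht.deriv hx.deriv).trans ?_
  simp; ring

/-- The inner integral of the Duhamel term is a difference of two values of `spacePrim w`, which
turns the iterated integral into two integrals along characteristics. -/
theorem waveSol_eq (hV₁ : Continuous V₁) (cw : Continuous fun p : ℝ × ℝ => w p.1 p.2)
    (t x : ℝ) :
    waveSol V₀ V₁ w t x = (V₀ (x + t) + V₀ (x - t)) / 2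
      + (∫ s in (x - t)..(x + t), V₁ s) / 2
      + (∫ τ in (0:ℝ)..t, ∫ ξ in (x - (t - τ))..(x + (t - τ)), w τ ξ) / 2 := by
  have h1 : ∫ s in (x - t)..(x + t), V₁ s
      = (∫ s in (0:ℝ)..(x + t), V₁ s) - ∫ s in (0:ℝ)..(x - t), V₁ s :=
    (integral_interval_sub_left (hV₁.intervalIntegrable _ _)
      (hV₁.intervalIntegrable _ _)).symm
  have h2 : ∫ τ in (0:ℝ)..t, ∫ ξ in (x - (t - τ))..(x + (t - τ)), w τ ξ
      = charInt (spacePrim w) (-1) t (x + t) - charInt (spacePrim w) 1 t (x - t) := by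
    have cF := continuous_spacePrim cw
    have c : ∀ ε y : ℝ, Continuous fun τ => spacePrim w τ (y + ε * τ) := fun ε y =>
      cF.comp (by fun_prop : Continuous fun τ : ℝ => (τ, y + ε * τ))
    unfold charInt
    rw [← integral_sub ((c _ _).intervalIntegrable _ _) ((c _ _).intervalIntegrable _ _)]
    refine integral_congr fun τ _ => ?_
    have cτ : Continuous fun ξ => w τ ξ :=
      cw.comp (by fun_prop : Continuous fun ξ : ℝ => (τ, ξ))
    have h := integral_interval_sub_left (a := 0) (b := x + (t - τ)) (c := x - (t - τ))
      (cτ.intervalIntegrable (μ := volume) _ _) (cτ.intervalIntegrable _ _)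
    simp only [spacePrim]
    rw [← h]
    ring_nf
  rw [h1, h2, waveSol]
  ring

end

/-! ### The half-plane case -/

/-- The d'Alembert/Duhamel formula (identity (4.21)) solves the
one-dimensional wave equation: for `V₀ ∈ C²`, `V₁ ∈ C¹` and `w` continuous
with continuous spatial derivative `wx = ∂ₓw` on `[0,∞) × ℝ`, the function
`S(t,x) = ½(V₀(x+t)+V₀(x−t)) + ½∫_{x−t}^{x+t} V₁ + ½∫₀ᵗ∫_{x−(t−τ)}^{x+(t−τ)} w`
is `C²` on `(0,∞) × ℝ`, satisfies `∂ₜₜS − ∂ₓₓS = w` there, and takes the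
initial data `S(0,·) = V₀`, `∂ₜS(0,·) = V₁`. -/
theorem dAlembert_solves_wave
    (V₀ V₁ : ℝ → ℝ) (w wx : ℝ → ℝ → ℝ) (S : ℝ → ℝ → ℝ)
    (hV₀ : ContDiff ℝ 2 V₀) (hV₁ : ContDiff ℝ 1 V₁)
    (hw : ContinuousOn (fun p : ℝ × ℝ => w p.1 p.2) (Ici 0 ×ˢ univ))
    (hwx : ContinuousOn (fun p : ℝ × ℝ => wx p.1 p.2) (Ici 0 ×ˢ univ))
    (hwd : ∀ τ ≥ (0:ℝ), ∀ ξ : ℝ, HasDerivAt (fun s => w τ s) (wx τ ξ) ξ)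
    (hS : ∀ t x, S t x =
        (V₀ (x + t) + V₀ (x - t)) / 2
        + (∫ s in (x - t)..(x + t), V₁ s) / 2
        + (∫ τ in (0:ℝ)..t, ∫ ξ in (x - (t - τ))..(x + (t - τ)), w τ ξ) / 2) :
    ContDiffOn ℝ 2 (fun p : ℝ × ℝ => S p.1 p.2) (Ioi 0 ×ˢ univ)
    ∧ (∀ t > (0:ℝ), ∀ x : ℝ,
        deriv (deriv (fun s => S s x)) t - deriv (deriv (fun ξ => S t ξ)) x = w t x)
    ∧ (∀ x : ℝ, S 0 x = V₀ x)
    ∧ (∀ x : ℝ, derivWithin (fun s => S s x) (Ici 0) 0 = V₁ x) := by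
  -- `W` and `Wx` extend `w` and `wx` to negative times by their values at time `0`.
  set W : ℝ → ℝ → ℝ := fun τ ξ => w (max τ 0) ξ with hW
  set Wx : ℝ → ℝ → ℝ := fun τ ξ => wx (max τ 0) ξ with hWx
  have cm : Continuous fun p : ℝ × ℝ => (max p.1 0, p.2) := by fun_prop
  have cW : Continuous fun p : ℝ × ℝ => W p.1 p.2 :=
    hw.comp_continuous cm fun p => ⟨mem_Ici.2 (le_max_right _ _), mem_univ _⟩
  have cWx : Continuous fun p : ℝ × ℝ => Wx p.1 p.2 :=
    hwx.comp_continuous cm fun p => ⟨mem_Ici.2 (le_max_right _ _), mem_univ _⟩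
  have hWd : ∀ τ y, HasDerivAt (fun y => W τ y) (Wx τ y) y :=
    fun τ y => hwd _ (le_max_right _ _) y
  have key : ∀ t ≥ (0:ℝ), ∀ x, S t x = waveSol V₀ V₁ W t x := by
    intro t ht x
    rw [hS, waveSol_eq hV₁.continuous cW]
    congr 2
    refine integral_congr fun τ hτ => ?_
    rw [uIcc_of_le ht] at hτ
    simp only [hW, max_eq_left hτ.1]
  have h0 : ∀ x, S 0 x = V₀ x := fun x => by simp [hS]
  refine ⟨?_, ?_, h0, ?_⟩
  · exact (contDiff_waveSol hV₀ hV₁ cW cWx hWd).contDiffOn.congr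
      fun p hp => key p.1 (le_of_lt hp.1) p.2
  · intro t ht x
    have e1 : (fun s => S s x) =ᶠ[nhds t] fun s => waveSol V₀ V₁ W s x := by
      filter_upwards [Ioi_mem_nhds ht] with s hs using key s (le_of_lt hs) x
    have e2 : (fun ξ => S t ξ) = fun ξ => waveSol V₀ V₁ W t ξ := funext (key t ht.le)
    rw [e1.deriv.deriv_eq, e2, waveSol_wave_eq hV₀ hV₁ cW cWx hWd]
    simp only [hW, max_eq_left ht.le]
  · intro x
    have h := (hasDerivAt_waveSol_time hV₀ hV₁ cW 0 x).hasDerivWithinAt (s := Ici 0)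
    have h' := h.congr (fun s hs => key s hs x) (key 0 le_rfl x)
    rw [h'.derivWithin (uniqueDiffOn_Ici 0 0 self_mem_Ici)]
    simp [riemannInv, charInt]
    ring
end

section
/- There exists a constant C > 0 such that for every continuously differentiable function u : ℝ → ℝ with compact support, one has ∫_ℝ u(x)⁴ dx ≤ C · ( ∫_ℝ |u(x)| dx )² · ∫_ℝ u'(x)² dx. -/
/-!
Let `M = max |u|`, `A = ∫ |u|` and `D = ∫ u'²`. Writing `u(x)²` as `∫_{-∞}^x 2 u u'` and applying
Cauchy–Schwarz gives Agmon's inequality `M⁴ ≤ 4 (∫ u²) D` (`agmon`). Since `∫ u² ≤ M A`, this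
yields `M³ ≤ 4 A D`, and then `∫ u⁴ ≤ M³ A ≤ 4 A² D`, so the constant `C = 4` works.
-/

open MeasureTheory

/-- Cauchy–Schwarz for continuous compactly supported functions, from the nonnegativity of the
quadratic polynomial `t ↦ ∫ (t f + g)²`. -/
lemma sq_integral_mul_le {f g : ℝ → ℝ} (hf : Continuous f) (hg : Continuous g)
    (hfs : HasCompactSupport f) (hgs : HasCompactSupport g) :
    (∫ x, f x * g x) ^ 2 ≤ (∫ x, f x ^ 2) * ∫ x, g x ^ 2 := by
  have i1 : Integrable (fun x => f x ^ 2) :=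
    (hf.pow 2).integrable_of_hasCompactSupport (by simpa [sq] using! hfs.mul_left (f := f))
  have i2 : Integrable (fun x => g x ^ 2) :=
    (hg.pow 2).integrable_of_hasCompactSupport (by simpa [sq] using! hgs.mul_left (f := g))
  have i3 : Integrable (fun x => f x * g x) :=
    (hf.mul hg).integrable_of_hasCompactSupport (hgs.mul_left (f := f))
  have key : ∀ t : ℝ, 0 ≤ (∫ x, f x ^ 2) * (t * t) + (2 * ∫ x, f x * g x) * t
      + ∫ x, g x ^ 2 := by
    intro t
    have h : 0 ≤ ∫ x, (t * f x + g x) ^ 2 := integral_nonneg fun x => sq_nonneg _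
    have e : (fun x => (t * f x + g x) ^ 2)
        = fun x => (t * t) * f x ^ 2 + (2 * t) * (f x * g x) + g x ^ 2 := by
      funext x; ring
    have i4 : Integrable (fun x => (t * t) * f x ^ 2 + (2 * t) * (f x * g x)) :=
      (i1.const_mul _).add (i3.const_mul _)
    rw [e, integral_add i4 i2,
      integral_add (i1.const_mul _) (i3.const_mul _), integral_const_mul,
      integral_const_mul] at h
    linarith
  have := discrim_le_zero key
  unfold discrim at this
  nlinarith

/-- Agmon's inequality `‖u‖_∞⁴ ≤ 4 ‖u‖₂² ‖u'‖₂²`, obtained by integrating `(u²)' = 2 u u'` over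
`(-∞, x]`. -/
lemma agmon {u : ℝ → ℝ} (hu : ContDiff ℝ 1 u) (hs : HasCompactSupport u) (x : ℝ) :
    |u x| ^ 4 ≤ 4 * ((∫ y, u y ^ 2) * ∫ y, deriv u y ^ 2) := by
  have hc := hu.continuous
  have hd : Continuous (deriv u) := hu.continuous_deriv le_rfl
  have h1 : ∫ y in Set.Iic x, deriv (fun y => u y * u y) y = u x * u x :=
    HasCompactSupport.integral_Iic_deriv_eq (hu.mul hu) (hs.mul_left (f := u)) x
  have h2 : deriv (fun y => u y * u y) = fun y => 2 * (u y * deriv u y) := by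
    funext y
    have := (hu.differentiable one_ne_zero y).hasDerivAt
    rw [(this.fun_mul this).deriv]; ring
  have i : Integrable (fun y => |u y| * |deriv u y|) :=
    (hc.abs.mul hd.abs).integrable_of_hasCompactSupport (hs.deriv.abs.mul_left (f := fun y => |u y|))
  have h3 : u x * u x ≤ 2 * ∫ y, |u y| * |deriv u y| := by
    rw [← h1, h2, integral_const_mul]
    gcongr
    calc _ ≤ ∫ y in Set.Iic x, |u y| * |deriv u y| := by
            refine integral_mono ((hc.mul hd).integrable_of_hasCompactSupport
              (hs.deriv.mul_left (f := u))).integrableOn i.integrableOn fun y => ?_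
            simpa only [abs_mul] using le_abs_self (u y * deriv u y)
      _ ≤ _ := setIntegral_le_integral i (Filter.Eventually.of_forall fun y => by positivity)
  have h4 := sq_integral_mul_le hc.abs hd.abs hs.abs hs.deriv.abs
  simp only [sq_abs] at h4
  have h5 : |u x| ^ 4 = (u x * u x) ^ 2 := by
    rw [show |u x| ^ 4 = (|u x| ^ 2) ^ 2 by ring, sq_abs]; ring
  rw [h5]
  have := pow_le_pow_left₀ (mul_self_nonneg (u x)) h3 2
  nlinarith

/-- The one-dimensional Gagliardo–Nirenberg inequality (4.37):
`‖u‖_{L⁴}⁴ ≤ C ‖u‖_{L¹}² ‖u'‖_{L²}²` for `u ∈ C¹_c(ℝ)`. -/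
theorem gagliardo_nirenberg_L4 :
    ∃ C > (0:ℝ), ∀ u : ℝ → ℝ, ContDiff ℝ 1 u → HasCompactSupport u →
      (∫ x : ℝ, (u x)^4)
        ≤ C * (∫ x : ℝ, |u x|)^2 * (∫ x : ℝ, (deriv u x)^2) := by
  refine ⟨4, by norm_num, fun u hu hs => ?_⟩
  obtain ⟨x₀, hx₀⟩ := hu.continuous.abs.exists_forall_ge_of_hasCompactSupport hs.abs
  have hM := agmon hu hs x₀
  set M := |u x₀|
  have hM0 : 0 ≤ M := abs_nonneg _
  have iA : Integrable (fun x => |u x|) :=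
    hu.continuous.abs.integrable_of_hasCompactSupport hs.abs
  set A := ∫ x, |u x|
  set D := ∫ x, deriv u x ^ 2
  have hA : 0 ≤ A := integral_nonneg fun x => abs_nonneg _
  have hD : 0 ≤ D := integral_nonneg fun x => sq_nonneg _
  have h2 : ∫ x, u x ^ 2 ≤ M * A := by
    rw [← integral_const_mul]
    refine integral_mono_of_nonneg (Filter.Eventually.of_forall fun x => sq_nonneg _)
      (iA.const_mul M) (Filter.Eventually.of_forall fun x => ?_)
    change u x ^ 2 ≤ M * |u x|
    rw [← sq_abs, sq]
    exact mul_le_mul_of_nonneg_right (hx₀ x) (abs_nonneg _)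
  have h4 : ∫ x, u x ^ 4 ≤ M ^ 3 * A := by
    rw [← integral_const_mul]
    refine integral_mono_of_nonneg (Filter.Eventually.of_forall fun x => (show Even 4 by decide).pow_nonneg (u x))
      (iA.const_mul _) (Filter.Eventually.of_forall fun x => ?_)
    change u x ^ 4 ≤ M ^ 3 * |u x|
    rw [← (show Even 4 by decide).pow_abs, pow_succ]
    exact mul_le_mul_of_nonneg_right (pow_le_pow_left₀ (abs_nonneg _) (hx₀ x) 3) (abs_nonneg _)
  have h3 : M ^ 3 ≤ 4 * A * D := by
    -- `agmon` and `h2` give `M * M³ ≤ M * (4 A D)`; dividing by `M` needs `M ≠ 0`.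
    rcases hM0.eq_or_lt with h | h
    · rw [← h, zero_pow three_ne_zero]; positivity
    · refine le_of_mul_le_mul_left ?_ h
      have := mul_le_mul_of_nonneg_right h2 hD
      linarith
  calc _ ≤ M ^ 3 * A := h4
    _ ≤ 4 * A * D * A := mul_le_mul_of_nonneg_right h3 hA
    _ = _ := by ring
end

section
/- Let T > 0. Let u : [0,T] × ℝ → ℝ be continuous with continuous partial derivatives ∂ₜu, ∂ₓu, ∂ₓₓu, and let V : [0,T] × ℝ → ℝ have continuous partial derivatives ∂ₓV and ∂ₓₓV. Assume u satisfies ∂ₜu = ∂ₓₓu + ∂ₓ( u ∂ₓV ) on [0,T] × ℝ. Assume moreover that for each t ∈ [0,T] the function u(t,·) is integrable on ℝ, and that the functions ∂ₓu, ∂ₓₓu, u·∂ₓV, and ∂ₓu·∂ₓV + u·∂ₓₓV are all square-integrable on (0,T) × ℝ. Then for every t ∈ [0,T], ∫_ℝ |u(t,x)| dx ≤ ∫_ℝ |u(0,x)| dx. -/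
/-!
The proof tests the equation against `φ'(u) χ`, where `φ(y) = √(y² + ε²)` is a convex regularization
of `|y|` and `χ(x) = 1 - (x/R)²` on `[-R, R]`. Because `χ(±R) = 0`, integrating by parts leaves no
boundary terms, and with the flux `F = ∂ₓu + u ∂ₓV` (so that `∂ₜu = ∂ₓF`)
`d/dt ∫ φ(u) χ = - ∫ φ''(u) ∂ₓu F χ - ∫ φ'(u) χ' F`.

* Completing the square, `- φ''(u) ∂ₓu (∂ₓu + u ∂ₓV) ≤ φ''(u) u² (∂ₓV)² / 4 ≤ ε (∂ₓV)² / 4`, which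
  vanishes as `ε → 0` since `∂ₓV` is bounded on compact sets (`cutoff_regularized`, `cutoff_abs`).
* Since `|φ'| ≤ 1` and `|χ'| ≤ 2/R`, the second term is at most `(2/R)|F| ≤ δ F² + 1/(δ R²)`.
  The flux is square integrable on `(0,T) × ℝ`, so after integration over `(0,t) × (-R,R)` this is
  at most `δ K + 2T/(δ R)`; the choice `R = r²`, `δ = 1/r` makes it tend to `0` as `r → ∞`.

On `[-r, r]` the cutoff is at least `1 - 1/r²`, and the claim follows in the limit `r → ∞`.
-/

open Set MeasureTheory intervalIntegral

/-! ### The convex regularization of the absolute value -/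

lemma hasDerivAt_sqrt_sq_add {ε : ℝ} (hε : 0 < ε) (y : ℝ) :
    HasDerivAt (fun y : ℝ => √(y ^ 2 + ε ^ 2)) (y / √(y ^ 2 + ε ^ 2)) y := by
  have hpos : 0 < y ^ 2 + ε ^ 2 := by positivity
  have h := ((hasDerivAt_pow 2 y).add_const (ε ^ 2)).sqrt hpos.ne'
  refine h.congr_deriv ?_
  norm_num
  field_simp

lemma hasDerivAt_div_sqrt_sq_add {ε : ℝ} (hε : 0 < ε) (y : ℝ) :
    HasDerivAt (fun y : ℝ => y / √(y ^ 2 + ε ^ 2)) (ε ^ 2 / √(y ^ 2 + ε ^ 2) ^ 3) y := by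
  have hpos : 0 < √(y ^ 2 + ε ^ 2) := Real.sqrt_pos.2 (by positivity)
  have hq : √(y ^ 2 + ε ^ 2) ^ 2 = y ^ 2 + ε ^ 2 := Real.sq_sqrt (by positivity)
  have h := (hasDerivAt_id' y).div (hasDerivAt_sqrt_sq_add hε y) hpos.ne'
  refine h.congr_deriv ?_
  field_simp
  linarith

/-- The pointwise estimate behind the energy inequality, with `y = u`, `a = ∂ₓu`, `b = ∂ₓV`,
`c = χ` and `d = χ'`. -/
lemma integrand_bound {ε δ R : ℝ} (hε : 0 < ε) (hδ : 0 < δ) (hR : 0 < R) (y a b c d : ℝ)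
    (hc0 : 0 ≤ c) (hc1 : c ≤ 1) (hd : |d| ≤ 2 / R) :
    -((ε ^ 2 / √(y ^ 2 + ε ^ 2) ^ 3 * a * c + y / √(y ^ 2 + ε ^ 2) * d) * (a + y * b)) ≤
      ε * (b ^ 2 / 4) + (δ * (a + y * b) ^ 2 + 1 / (δ * R ^ 2)) := by
  set q := √(y ^ 2 + ε ^ 2) with hqdef
  have hq : 0 < q := Real.sqrt_pos.2 (by positivity)
  have hq2 : q ^ 2 = y ^ 2 + ε ^ 2 := Real.sq_sqrt (by positivity)
  have hqε : ε ≤ q := by nlinarith [sq_nonneg y]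
  have hyq : |y| ≤ q := abs_le_of_sq_le_sq (by nlinarith [sq_nonneg ε]) hq.le
  have hk : ε ^ 2 / q ^ 3 * y ^ 2 ≤ ε := by
    rw [div_mul_eq_mul_div, div_le_iff₀ (by positivity)]
    have h1 : ε * y ^ 2 ≤ q * q ^ 2 :=
      mul_le_mul hqε (by nlinarith [sq_nonneg ε]) (sq_nonneg y) hq.le
    nlinarith
  have hk0 : 0 ≤ ε ^ 2 / q ^ 3 := by positivity
  set k := ε ^ 2 / q ^ 3
  have h1 : -(k * a * c * (a + y * b)) ≤ ε * (b ^ 2 / 4) := by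
    have e1 : -(k * a * c * (a + y * b)) ≤ k * c * (y * b) ^ 2 / 4 := by
      nlinarith [mul_nonneg (mul_nonneg hk0 hc0) (sq_nonneg (a + y * b / 2))]
    have e2 : (k * y ^ 2) * c ≤ ε * 1 := mul_le_mul hk hc1 hc0 hε.le
    nlinarith [mul_le_mul_of_nonneg_right e2 (sq_nonneg b)]
  have h2 : -(y / q * d * (a + y * b)) ≤ δ * (a + y * b) ^ 2 + 1 / (δ * R ^ 2) := by
    generalize a + y * b = F
    have e1 : |y / q| ≤ 1 := by
      rw [abs_div, abs_of_pos hq]; exact (div_le_one hq).2 hyq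
    have e2 : -(y / q * d * F) ≤ 2 / R * |F| := by
      refine (neg_le_abs _).trans ?_
      rw [abs_mul, abs_mul]
      gcongr
      calc |y / q| * |d| ≤ 1 * (2 / R) := mul_le_mul e1 hd (abs_nonneg _) zero_le_one
        _ = 2 / R := one_mul _
    have e3 : 2 / R * |F| ≤ δ * F ^ 2 + 1 / (δ * R ^ 2) := by
      have e4 : δ * F ^ 2 + 1 / (δ * R ^ 2) - 2 / R * |F| = δ * (|F| - 1 / (δ * R)) ^ 2 := by
        rw [← sq_abs F]; field_simp; ring
      nlinarith [mul_nonneg hδ.le (sq_nonneg (|F| - 1 / (δ * R)))]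
    exact e2.trans e3
  nlinarith

/-! ### Localized energy estimates -/

lemma cutoff_nonneg {R x : ℝ} (hR : 0 < R) (hx : x ∈ Icc (-R) R) : 0 ≤ 1 - (x / R) ^ 2 := by
  have : |x / R| ≤ 1 := by
    rw [abs_div, abs_of_pos hR]; exact (div_le_one hR).2 (abs_le.2 hx)
  nlinarith [sq_abs (x / R), abs_nonneg (x / R)]

/-- Energy inequality for the regularized absolute value and the cutoff `1 - (x/R)²`; here `b`
stands for `∂ₓV` and `w` for `∂ₜu`, which equals the `x`-derivative of the flux by `hdF`. -/
lemma cutoff_regularized {t R ε δ : ℝ} (ht : 0 ≤ t) (hR : 0 < R) (hε : 0 < ε) (hδ : 0 < δ)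
    (u w ux b : ℝ → ℝ → ℝ)
    (hu : Continuous (fun p : ℝ × ℝ => u p.1 p.2)) (hw : Continuous (fun p : ℝ × ℝ => w p.1 p.2))
    (hux : Continuous (fun p : ℝ × ℝ => ux p.1 p.2)) (hb : Continuous (fun p : ℝ × ℝ => b p.1 p.2))
    (hdt : ∀ s ∈ Ioo 0 t, ∀ x, HasDerivAt (fun s => u s x) (w s x) s)
    (hdx : ∀ s x, HasDerivAt (u s) (ux s x) x)
    (hdF : ∀ s x, HasDerivAt (fun x => ux s x + u s x * b s x) (w s x) x) :
    (∫ x in -R..R, √(u t x ^ 2 + ε ^ 2) * (1 - (x / R) ^ 2)) ≤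
      (∫ x in -R..R, √(u 0 x ^ 2 + ε ^ 2) * (1 - (x / R) ^ 2)) +
      ∫ s in 0..t, ∫ x in -R..R, (ε * (b s x ^ 2 / 4) +
        (δ * (ux s x + u s x * b s x) ^ 2 + 1 / (δ * R ^ 2))) := by
  have hne : ∀ y : ℝ, √(y ^ 2 + ε ^ 2) ≠ 0 := fun y => (Real.sqrt_pos.2 (by positivity)).ne'
  have hut : ∀ s, Continuous (u s) := fun s => hu.comp (Continuous.prodMk_right s)
  have hwt : ∀ s, Continuous (w s) := fun s => hw.comp (Continuous.prodMk_right s)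
  have huxt : ∀ s, Continuous (ux s) := fun s => hux.comp (Continuous.prodMk_right s)
  have hbt : ∀ s, Continuous (b s) := fun s => hb.comp (Continuous.prodMk_right s)
  have hux' : ∀ x, Continuous (fun s => u s x) := fun x => hu.comp (Continuous.prodMk_left x)
  have hwx' : ∀ x, Continuous (fun s => w s x) := fun x => hw.comp (Continuous.prodMk_left x)
  let g : ℝ → ℝ → ℝ := fun s x =>
    u s x / √(u s x ^ 2 + ε ^ 2) * (1 - (x / R) ^ 2) * w s x
  have hg : Continuous (Function.uncurry g) := by
    change Continuous fun p : ℝ × ℝ =>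
      u p.1 p.2 / √(u p.1 p.2 ^ 2 + ε ^ 2) * (1 - (p.2 / R) ^ 2) * w p.1 p.2
    have : ∀ p : ℝ × ℝ, √(u p.1 p.2 ^ 2 + ε ^ 2) ≠ 0 := fun p => hne _
    fun_prop (disch := assumption)
  have htime : ∀ x, ∫ s in 0..t, g s x =
      √(u t x ^ 2 + ε ^ 2) * (1 - (x / R) ^ 2) - √(u 0 x ^ 2 + ε ^ 2) * (1 - (x / R) ^ 2) := by
    intro x
    refine integral_eq_sub_of_hasDerivAt_of_le
      (f := fun s => √(u s x ^ 2 + ε ^ 2) * (1 - (x / R) ^ 2)) ht ?_ ?_ ?_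
    · have := hux' x
      fun_prop
    · intro s hs
      have h := ((hasDerivAt_sqrt_sq_add hε (u s x)).comp s (hdt s hs x)).mul_const
        (1 - (x / R) ^ 2)
      refine h.congr_deriv ?_
      simp only [g]
      ring
    · exact (hg.comp (Continuous.prodMk_left x)).intervalIntegrable _ _
  have hspace : ∀ s, ∫ x in -R..R, g s x ≤ ∫ x in -R..R, (ε * (b s x ^ 2 / 4) +
        (δ * (ux s x + u s x * b s x) ^ 2 + 1 / (δ * R ^ 2))) := by
    intro s
    have c1 := hut s
    have c2 := hwt s
    have c3 := huxt s
    have c4 := hbt s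
    have c5 : ∀ x, √(u s x ^ 2 + ε ^ 2) ≠ 0 := fun x => hne _
    have c6 : ∀ x, √(u s x ^ 2 + ε ^ 2) ^ 3 ≠ 0 := fun x => pow_ne_zero _ (hne _)
    let d : ℝ → ℝ := fun x => ε ^ 2 / √(u s x ^ 2 + ε ^ 2) ^ 3 * ux s x * (1 - (x / R) ^ 2) +
      u s x / √(u s x ^ 2 + ε ^ 2) * (-(2 * x / R ^ 2))
    have hd : Continuous d := by
      fun_prop (disch := assumption)
    have hχ : ∀ x : ℝ, HasDerivAt (fun x : ℝ => 1 - (x / R) ^ 2) (-(2 * x / R ^ 2)) x := by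
      intro x
      refine ((((hasDerivAt_id' x).div_const R).pow 2).const_sub 1).congr_deriv ?_
      norm_num
      field_simp
    have hparts := intervalIntegral.integral_mul_deriv_eq_deriv_mul (a := -R) (b := R)
      (u := fun x => u s x / √(u s x ^ 2 + ε ^ 2) * (1 - (x / R) ^ 2)) (u' := d)
      (v := fun x => ux s x + u s x * b s x) (v' := w s)
      (fun x _ => ((hasDerivAt_div_sqrt_sq_add hε (u s x)).comp x (hdx s x)).mul (hχ x))
      (fun x _ => hdF s x) (hd.intervalIntegrable _ _) (c2.intervalIntegrable _ _)
    have hRR : (R / R) = 1 := div_self hR.ne'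
    have hgs : ∫ x in -R..R, g s x = ∫ x in -R..R, -(d x * (ux s x + u s x * b s x)) := by
      rw [intervalIntegral.integral_neg]
      refine hparts.trans ?_
      simp [neg_div, hRR]
    rw [hgs]
    refine intervalIntegral.integral_mono_on (by linarith)
      (Continuous.intervalIntegrable (by fun_prop) _ _)
      (Continuous.intervalIntegrable (by fun_prop) _ _) fun x hx => ?_
    refine integrand_bound hε hδ hR _ _ _ _ _ (cutoff_nonneg hR hx)
      (by linarith [sq_nonneg (x / R)]) ?_
    rw [abs_neg, abs_div, abs_mul, abs_of_pos (by positivity : 0 < R ^ 2),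
      div_le_div_iff₀ (by positivity) hR, abs_two]
    nlinarith [abs_le.2 hx]
  have hswap : ∫ x in -R..R, ∫ s in 0..t, g s x = ∫ s in 0..t, ∫ x in -R..R, g s x := by
    refine (intervalIntegral_intervalIntegral_swap ?_).symm
    exact (hg.continuousOn.integrableOn_compact (isCompact_uIcc.prod isCompact_uIcc)).mono_set
      (prod_mono uIoc_subset_uIcc uIoc_subset_uIcc)
  simp_rw [htime] at hswap
  have i1 : ∀ r, IntervalIntegrable (fun x => √(u r x ^ 2 + ε ^ 2) * (1 - (x / R) ^ 2))
      volume (-R) R := fun r => by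
    have := hut r
    exact Continuous.intervalIntegrable (by fun_prop) _ _
  rw [intervalIntegral.integral_sub (i1 t) (i1 0)] at hswap
  have hmono : ∫ s in 0..t, ∫ x in -R..R, g s x ≤ ∫ s in 0..t, ∫ x in -R..R,
      (ε * (b s x ^ 2 / 4) + (δ * (ux s x + u s x * b s x) ^ 2 + 1 / (δ * R ^ 2))) := by
    refine intervalIntegral.integral_mono_on ht ?_ ?_ fun s _ => hspace s
    · exact (continuous_parametric_intervalIntegral_of_continuous' hg _ _).intervalIntegrable _ _
    · refine (continuous_parametric_intervalIntegral_of_continuous' ?_ _ _).intervalIntegrable _ _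
      simp only [Function.uncurry_def]
      fun_prop
  linarith

/-- The limit `ε → 0` of `cutoff_regularized`: the error there is linear in `ε`, because
`√(y² + ε²) ≤ |y| + ε`. -/
lemma cutoff_abs {t R δ : ℝ} (ht : 0 ≤ t) (hR : 0 < R) (hδ : 0 < δ)
    (u w ux b : ℝ → ℝ → ℝ)
    (hu : Continuous (fun p : ℝ × ℝ => u p.1 p.2)) (hw : Continuous (fun p : ℝ × ℝ => w p.1 p.2))
    (hux : Continuous (fun p : ℝ × ℝ => ux p.1 p.2)) (hb : Continuous (fun p : ℝ × ℝ => b p.1 p.2))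
    (hdt : ∀ s ∈ Ioo 0 t, ∀ x, HasDerivAt (fun s => u s x) (w s x) s)
    (hdx : ∀ s x, HasDerivAt (u s) (ux s x) x)
    (hdF : ∀ s x, HasDerivAt (fun x => ux s x + u s x * b s x) (w s x) x) :
    (∫ x in -R..R, |u t x| * (1 - (x / R) ^ 2)) ≤ (∫ x in -R..R, |u 0 x|) +
      ∫ s in 0..t, ∫ x in -R..R, (δ * (ux s x + u s x * b s x) ^ 2 + 1 / (δ * R ^ 2)) := by
  have hut : ∀ s, Continuous (u s) := fun s => hu.comp (Continuous.prodMk_right s)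
  have huxt : ∀ s, Continuous (ux s) := fun s => hux.comp (Continuous.prodMk_right s)
  have hbt : ∀ s, Continuous (b s) := fun s => hb.comp (Continuous.prodMk_right s)
  have hRR : -R ≤ R := by linarith
  set B := ∫ s in 0..t, ∫ x in -R..R, b s x ^ 2 / 4 with hB
  have hB0 : 0 ≤ B := intervalIntegral.integral_nonneg ht fun s _ =>
    intervalIntegral.integral_nonneg hRR fun x _ => by positivity
  have key : ∀ ε > 0, (∫ x in -R..R, |u t x| * (1 - (x / R) ^ 2)) ≤ ((∫ x in -R..R, |u 0 x|) +
      ∫ s in 0..t, ∫ x in -R..R, (δ * (ux s x + u s x * b s x) ^ 2 + 1 / (δ * R ^ 2))) +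
      ε * (2 * R + B) := by
    intro ε hε
    have h := cutoff_regularized ht hR hε hδ u w ux b hu hw hux hb hdt hdx hdF
    have h1 : (∫ x in -R..R, |u t x| * (1 - (x / R) ^ 2)) ≤
        ∫ x in -R..R, √(u t x ^ 2 + ε ^ 2) * (1 - (x / R) ^ 2) := by
      have := hut t
      refine intervalIntegral.integral_mono_on hRR
        (Continuous.intervalIntegrable (by fun_prop) _ _)
        (Continuous.intervalIntegrable (by fun_prop) _ _) fun x hx => ?_
      refine mul_le_mul_of_nonneg_right ?_ (cutoff_nonneg hR hx)
      exact Real.abs_le_sqrt (by nlinarith)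
    have h2 : (∫ x in -R..R, √(u 0 x ^ 2 + ε ^ 2) * (1 - (x / R) ^ 2)) ≤
        (∫ x in -R..R, |u 0 x|) + ε * (2 * R) := by
      have := hut 0
      have e : (∫ x in -R..R, |u 0 x|) + ε * (2 * R) = ∫ x in -R..R, (|u 0 x| + ε) := by
        rw [intervalIntegral.integral_add (Continuous.intervalIntegrable (by fun_prop) _ _)
          (Continuous.intervalIntegrable (by fun_prop) _ _)]
        simp; ring
      rw [e]
      refine intervalIntegral.integral_mono_on hRR
        (Continuous.intervalIntegrable (by fun_prop) _ _)
        (Continuous.intervalIntegrable (by fun_prop) _ _) fun x hx => ?_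
      have e1 : √(u 0 x ^ 2 + ε ^ 2) ≤ |u 0 x| + ε := by
        refine Real.sqrt_le_iff.2 ⟨by positivity, ?_⟩
        nlinarith [sq_abs (u 0 x), mul_nonneg (abs_nonneg (u 0 x)) hε.le]
      refine (mul_le_of_le_one_right (Real.sqrt_nonneg _) ?_).trans e1
      linarith [sq_nonneg (x / R)]
    have h3 : ∫ s in 0..t, ∫ x in -R..R, (ε * (b s x ^ 2 / 4) +
          (δ * (ux s x + u s x * b s x) ^ 2 + 1 / (δ * R ^ 2))) = ε * B +
        ∫ s in 0..t, ∫ x in -R..R, (δ * (ux s x + u s x * b s x) ^ 2 + 1 / (δ * R ^ 2)) := by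
      rw [hB, ← intervalIntegral.integral_const_mul, ← intervalIntegral.integral_add]
      · refine intervalIntegral.integral_congr fun s _ => ?_
        have c1 := hut s
        have c3 := huxt s
        have c4 := hbt s
        rw [← intervalIntegral.integral_const_mul, ← intervalIntegral.integral_add
          (Continuous.intervalIntegrable (by fun_prop) _ _)
          (Continuous.intervalIntegrable (by fun_prop) _ _)]
      · refine (Continuous.const_mul (continuous_parametric_intervalIntegral_of_continuous'
          ?_ _ _) _).intervalIntegrable _ _
        simp only [Function.uncurry_def]
        fun_prop
      · refine (continuous_parametric_intervalIntegral_of_continuous' ?_ _ _).intervalIntegrable _ _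
        simp only [Function.uncurry_def]
        fun_prop
    linarith
  refine le_of_forall_pos_le_add fun η hη => ?_
  have hpos : 0 < 2 * R + B := by linarith
  have := key (η / (2 * R + B)) (by positivity)
  rwa [div_mul_cancel₀ _ hpos.ne'] at this

/-! ### Removal of the cutoff -/

/-- Lemma 4.3 (`L¹` contraction): if `u` is a classical solution on
`[0,T] × ℝ` of the transport–diffusion equation `∂ₜu = ∂ₓₓu + ∂ₓ(u ∂ₓV)`
(with `ut = ∂ₜu`, `ux = ∂ₓu`, `uxx = ∂ₓₓu`, `Vx = ∂ₓV`, `Vxx = ∂ₓₓV`), with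
`u(t,·) ∈ L¹(ℝ)` for each `t` and `∂ₓu`, `∂ₓₓu`, `u∂ₓV`,
`∂ₓu·∂ₓV + u·∂ₓₓV` square-integrable on `(0,T) × ℝ`, then
`‖u(t,·)‖_{L¹} ≤ ‖u(0,·)‖_{L¹}` for every `t ∈ [0,T]`. -/
theorem L1_contraction
    (T : ℝ) (hT : 0 < T)
    (u ut ux uxx V Vx Vxx : ℝ → ℝ → ℝ)
    (hu_cont : ContinuousOn (fun p : ℝ × ℝ => u p.1 p.2) (Icc 0 T ×ˢ univ))
    (hut_cont : ContinuousOn (fun p : ℝ × ℝ => ut p.1 p.2) (Icc 0 T ×ˢ univ))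
    (hux_cont : ContinuousOn (fun p : ℝ × ℝ => ux p.1 p.2) (Icc 0 T ×ˢ univ))
    (huxx_cont : ContinuousOn (fun p : ℝ × ℝ => uxx p.1 p.2) (Icc 0 T ×ˢ univ))
    (hVx_cont : ContinuousOn (fun p : ℝ × ℝ => Vx p.1 p.2) (Icc 0 T ×ˢ univ))
    (hVxx_cont : ContinuousOn (fun p : ℝ × ℝ => Vxx p.1 p.2) (Icc 0 T ×ˢ univ))
    (hut : ∀ t ∈ Icc (0:ℝ) T, ∀ x : ℝ,
      HasDerivWithinAt (fun s => u s x) (ut t x) (Icc 0 T) t)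
    (hux : ∀ t ∈ Icc (0:ℝ) T, ∀ x : ℝ, HasDerivAt (fun ξ => u t ξ) (ux t x) x)
    (huxx : ∀ t ∈ Icc (0:ℝ) T, ∀ x : ℝ, HasDerivAt (fun ξ => ux t ξ) (uxx t x) x)
    (hVx : ∀ t ∈ Icc (0:ℝ) T, ∀ x : ℝ, HasDerivAt (fun ξ => V t ξ) (Vx t x) x)
    (hVxx : ∀ t ∈ Icc (0:ℝ) T, ∀ x : ℝ, HasDerivAt (fun ξ => Vx t ξ) (Vxx t x) x)
    (hpde : ∀ t ∈ Icc (0:ℝ) T, ∀ x : ℝ,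
      ut t x = uxx t x + (ux t x * Vx t x + u t x * Vxx t x))
    (hL1 : ∀ t ∈ Icc (0:ℝ) T, Integrable (u t))
    (hux_L2 : IntegrableOn (fun p : ℝ × ℝ => (ux p.1 p.2)^2) (Ioo 0 T ×ˢ univ))
    (huxx_L2 : IntegrableOn (fun p : ℝ × ℝ => (uxx p.1 p.2)^2) (Ioo 0 T ×ˢ univ))
    (huVx_L2 : IntegrableOn (fun p : ℝ × ℝ => (u p.1 p.2 * Vx p.1 p.2)^2)
      (Ioo 0 T ×ˢ univ))
    (hdiv_L2 : IntegrableOn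
      (fun p : ℝ × ℝ => (ux p.1 p.2 * Vx p.1 p.2 + u p.1 p.2 * Vxx p.1 p.2)^2)
      (Ioo 0 T ×ˢ univ)) :
    ∀ t ∈ Icc (0:ℝ) T, (∫ x : ℝ, |u t x|) ≤ ∫ x : ℝ, |u 0 x| := by
  intro t ht
  -- Freezing time outside `[0, T]` extends all the functions continuously to the whole plane.
  let c : ℝ → ℝ := fun s => max 0 (min s T)
  have hc : Continuous c := by fun_prop
  have hcm : ∀ s, c s ∈ Icc 0 T := fun s => ⟨le_max_left _ _, max_le hT.le (min_le_right _ _)⟩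
  have hceq : ∀ s ∈ Icc 0 T, c s = s := fun s hs => by simp [c, hs.1, hs.2]
  have hext : ∀ f : ℝ → ℝ → ℝ, ContinuousOn (fun p : ℝ × ℝ => f p.1 p.2) (Icc 0 T ×ˢ univ) →
      Continuous (fun p : ℝ × ℝ => f (c p.1) p.2) := fun f hf =>
    hf.comp_continuous (f := fun p : ℝ × ℝ => (c p.1, p.2)) (by fun_prop)
      fun p => ⟨hcm _, mem_univ _⟩
  have Cu := hext u hu_cont
  have Cx := hext ux hux_cont
  have Cb := hext Vx hVx_cont
  set G : ℝ × ℝ → ℝ := fun p => 2 * (ux p.1 p.2) ^ 2 + 2 * (u p.1 p.2 * Vx p.1 p.2) ^ 2 with hG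
  have hGint : IntegrableOn G (Ioo 0 T ×ˢ univ) := (hux_L2.const_mul 2).add (huVx_L2.const_mul 2)
  have hG0 : ∀ p, 0 ≤ G p := fun p => by positivity
  set K := ∫ p in Ioo 0 T ×ˢ univ, G p with hK
  have hflux : ∀ R > 0, ∫ s in 0..t, ∫ x in -R..R,
      (ux (c s) x + u (c s) x * Vx (c s) x) ^ 2 ≤ K := by
    intro R hR
    have hsub : Ioo 0 t ×ˢ Ioc (-R) R ⊆ Ioo 0 T ×ˢ (univ : Set ℝ) :=
      prod_mono (Ioo_subset_Ioo_right ht.2) (subset_univ _)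
    have hFint : IntegrableOn (fun p : ℝ × ℝ =>
        (ux (c p.1) p.2 + u (c p.1) p.2 * Vx (c p.1) p.2) ^ 2) (Ioo 0 t ×ˢ Ioc (-R) R) := by
      refine IntegrableOn.mono_set (t := Icc 0 t ×ˢ Icc (-R) R) ?_
        (prod_mono Ioo_subset_Icc_self Ioc_subset_Icc_self)
      exact ((Cx.add (Cu.mul Cb)).pow 2).continuousOn.integrableOn_compact
        (isCompact_Icc.prod isCompact_Icc)
    have e : ∫ s in 0..t, ∫ x in -R..R, (ux (c s) x + u (c s) x * Vx (c s) x) ^ 2 =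
        ∫ p in Ioo 0 t ×ˢ Ioc (-R) R,
          (ux (c p.1) p.2 + u (c p.1) p.2 * Vx (c p.1) p.2) ^ 2 := by
      rw [intervalIntegral.integral_of_le ht.1, integral_Ioc_eq_integral_Ioo,
        Measure.volume_eq_prod, setIntegral_prod _ (by rwa [← Measure.volume_eq_prod])]
      refine setIntegral_congr_fun measurableSet_Ioo fun s _ => ?_
      exact intervalIntegral.integral_of_le (by linarith)
    rw [e]
    calc _ ≤ ∫ p in Ioo 0 t ×ˢ Ioc (-R) R, G p := by
          refine setIntegral_mono_on hFint (hGint.mono_set hsub)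
            (measurableSet_Ioo.prod measurableSet_Ioc) fun p hp => ?_
          rw [hceq p.1 ⟨hp.1.1.le, hp.1.2.le.trans ht.2⟩]
          simp only [hG]
          nlinarith [sq_nonneg (ux p.1 p.2 - u p.1 p.2 * Vx p.1 p.2)]
      _ ≤ K := setIntegral_mono_set hGint (.of_forall hG0) hsub.eventuallyLE
  have hcut : ∀ R > 0, ∀ δ > 0, (∫ x in -R..R, |u t x| * (1 - (x / R) ^ 2)) ≤
      (∫ x, |u 0 x|) + (δ * K + t * (2 * R * (1 / (δ * R ^ 2)))) := by
    intro R hR δ hδ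
    have h := cutoff_abs ht.1 hR hδ (fun s => u (c s)) (fun s => ut (c s)) (fun s => ux (c s))
      (fun s => Vx (c s)) Cu (hext ut hut_cont) Cx Cb ?_ (fun s x => hux _ (hcm s) x) ?_
    · simp only [hceq t ht, hceq 0 ⟨le_rfl, hT.le⟩] at h
      have h0 : ∫ x in -R..R, |u 0 x| ≤ ∫ x, |u 0 x| := by
        rw [intervalIntegral.integral_of_le (by linarith)]
        exact setIntegral_le_integral (hL1 0 ⟨le_rfl, hT.le⟩).abs (.of_forall fun x => abs_nonneg _)
      have h1 : ∫ s in 0..t, ∫ x in -R..R,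
          (δ * (ux (c s) x + u (c s) x * Vx (c s) x) ^ 2 + 1 / (δ * R ^ 2)) =
          δ * (∫ s in 0..t, ∫ x in -R..R, (ux (c s) x + u (c s) x * Vx (c s) x) ^ 2) +
            t * (2 * R * (1 / (δ * R ^ 2))) := by
        have e : ∀ s, ∫ x in -R..R,
            (δ * (ux (c s) x + u (c s) x * Vx (c s) x) ^ 2 + 1 / (δ * R ^ 2)) =
            δ * (∫ x in -R..R, (ux (c s) x + u (c s) x * Vx (c s) x) ^ 2) +
              2 * R * (1 / (δ * R ^ 2)) := by
          intro s
          have c1 : Continuous (u (c s)) := Cu.comp (Continuous.prodMk_right s)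
          have c2 : Continuous (ux (c s)) := Cx.comp (Continuous.prodMk_right s)
          have c3 : Continuous (Vx (c s)) := Cb.comp (Continuous.prodMk_right s)
          rw [intervalIntegral.integral_add (Continuous.intervalIntegrable (by fun_prop) _ _)
            (Continuous.intervalIntegrable (by fun_prop) _ _),
            intervalIntegral.integral_const_mul, intervalIntegral.integral_const, smul_eq_mul]
          ring
        simp_rw [e]
        rw [intervalIntegral.integral_add _ (Continuous.intervalIntegrable (by fun_prop) _ _),
          intervalIntegral.integral_const_mul, intervalIntegral.integral_const, smul_eq_mul,
          sub_zero]
        refine (Continuous.const_mul (continuous_parametric_intervalIntegral_of_continuous'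
          ?_ _ _) _).intervalIntegrable _ _
        exact (Cx.add (Cu.mul Cb)).pow 2
      rw [h1] at h
      have := mul_le_mul_of_nonneg_left (hflux R hR) hδ.le
      linarith
    · intro s hs x
      have hs' : s ∈ Ioo 0 T := ⟨hs.1, hs.2.trans_le ht.2⟩
      have hn : Icc 0 T ∈ nhds s := Icc_mem_nhds hs'.1 hs'.2
      have hd := (hut s ⟨hs'.1.le, hs'.2.le⟩ x).hasDerivAt hn
      rw [hceq s ⟨hs'.1.le, hs'.2.le⟩]
      refine hd.congr_of_eventuallyEq ?_
      filter_upwards [hn] with r hr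
      rw [hceq r hr]
    · intro s x
      have h := (huxx _ (hcm s) x).add ((hux _ (hcm s) x).mul (hVxx _ (hcm s) x))
      rw [hpde _ (hcm s) x]
      exact h
  have hut_c : Continuous (u t) :=
    continuous_iff_continuousAt.2 fun x => (hux t ht x).continuousAt
  -- The estimate `hcut` with `R = r ^ 2` and `δ = r⁻¹`, using `χ ≥ 1 - r⁻²` on `[-r, r]`.
  have hfin : ∀ r : ℝ, 1 ≤ r → (1 - r⁻¹ ^ 2) * (∫ x in -r..r, |u t x|) ≤
      (∫ x, |u 0 x|) + r⁻¹ * (K + 2 * t) := by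
    intro r hr
    have hr0 : 0 < r := by linarith
    have hrr : r ≤ r ^ 2 := by nlinarith
    have h := hcut (r ^ 2) (by positivity) r⁻¹ (by positivity)
    have e : r⁻¹ * K + t * (2 * r ^ 2 * (1 / (r⁻¹ * (r ^ 2) ^ 2))) = r⁻¹ * (K + 2 * t) := by
      field_simp
    rw [e] at h
    refine le_trans ?_ h
    rw [← intervalIntegral.integral_const_mul]
    calc _ ≤ ∫ x in -r..r, |u t x| * (1 - (x / r ^ 2) ^ 2) := by
          refine intervalIntegral.integral_mono_on (by linarith)
            (Continuous.intervalIntegrable (by fun_prop) _ _)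
            (Continuous.intervalIntegrable (by fun_prop) _ _) fun x hx => ?_
          rw [mul_comm]
          refine mul_le_mul_of_nonneg_left ?_ (abs_nonneg _)
          have e1 : |x / r ^ 2| ≤ r⁻¹ := by
            rw [abs_div, abs_of_pos (by positivity : 0 < r ^ 2), div_le_iff₀ (by positivity)]
            calc |x| ≤ r := abs_le.2 hx
              _ = r⁻¹ * r ^ 2 := by field_simp
          have e2 := sq_le_sq' (by linarith [abs_nonneg (x / r ^ 2), inv_pos.2 hr0]) e1
          rw [sq_abs] at e2
          linarith
      _ ≤ _ := by
          refine intervalIntegral.integral_mono_interval (by linarith) (by linarith) hrr ?_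
            (Continuous.intervalIntegrable (by fun_prop) _ _)
          refine (ae_restrict_iff' measurableSet_Ioc).2 (.of_forall fun x hx => ?_)
          exact mul_nonneg (abs_nonneg _)
            (cutoff_nonneg (by positivity) (Ioc_subset_Icc_self hx))
  have hl1 := intervalIntegral_tendsto_integral (hL1 t ht).abs
    Filter.tendsto_neg_atTop_atBot Filter.tendsto_id
  have hinv : Filter.Tendsto (fun r : ℝ => r⁻¹) Filter.atTop (nhds 0) := tendsto_inv_atTop_zero
  have hl := ((hinv.pow 2).const_sub 1).mul hl1
  have hr := (hinv.mul_const (K + 2 * t)).const_add (∫ x, |u 0 x|)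
  have := le_of_tendsto_of_tendsto hl hr
    ((Filter.eventually_ge_atTop 1).mono fun r hr => hfin r hr)
  simpa using this
end

section
/- Let T > 0. Let u : [0,T] × ℝ → ℝ be continuous with continuous partial derivatives ∂ₜu, ∂ₓu, ∂ₓₓu, and let V : [0,T] × ℝ → ℝ have continuous partial derivatives ∂ₓV and ∂ₓₓV. Assume u satisfies ∂ₜu = ∂ₓₓu + ∂ₓ( u ∂ₓV ) on [0,T] × ℝ. Assume moreover that for each t ∈ [0,T] the function u(t,·) is integrable on ℝ, and that the functions ∂ₓu, ∂ₓₓu, u·∂ₓV, and ∂ₓu·∂ₓV + u·∂ₓₓV are all square-integrable on (0,T) × ℝ. If u(0,x) ≥ 0 for all x ∈ ℝ, then u(t,x) ≥ 0 for all (t,x) ∈ [0,T] × ℝ. -/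
/-!
Write `g = ∂ₓu + u ∂ₓV`, so that the equation reads `∂ₜu = ∂ₓg`, and `u⁻ = max (-u) 0`. The proof
is an `L¹` contraction argument on bounded intervals.

For a smooth convex approximation `η` of `s ↦ s⁻` one has
`∂ₜ η(u) = ∂ₓ(η'(u) g) - η''(u) ∂ₓu (∂ₓu + u ∂ₓV)`. Completing the square, the last term is at most
`η''(u) u² (∂ₓV)²`, and for `η(s) = (√(s² + ε²) - s) / 2` the quantity `η''(s) s²` is at most `ε`
uniformly in `s`. As `|η'| ≤ 1` and `∂ₓV` is bounded on `[0,T] × [-r,r]`, integrating over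
`[0,t] × [-r,r]` and letting `ε → 0` gives (`flux_estimate`)
`∫_{-r}^{r} u⁻(t,x) dx ≤ ∫_0^t (|g(s,r)| + |g(s,-r)|) ds`.

The left side is nondecreasing in `r`. If `u(t,·)` were negative somewhere, it would be at least
some `A > 0` for all large `r`, so by Young's inequality
`∫_0^T ((∂ₓu)² + (u ∂ₓV)²)(s,±r) ds`, summed over the two signs, would be bounded below by a
positive constant for all large `r`. By Fubini this function of `r` is integrable on `ℝ`:
a contradiction.
-/

open Set MeasureTheory intervalIntegral

/-- A smooth convex approximation of the negative part `s ↦ max (-s) 0`, for `ε > 0`. -/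
noncomputable def regNeg (ε s : ℝ) : ℝ := (√(s ^ 2 + ε ^ 2) - s) / 2

/-- The derivative of `regNeg ε`. -/
noncomputable def regNeg' (ε s : ℝ) : ℝ := (s / √(s ^ 2 + ε ^ 2) - 1) / 2

/-- The second derivative of `regNeg ε`. -/
noncomputable def regNeg'' (ε s : ℝ) : ℝ := ε ^ 2 / (2 * √(s ^ 2 + ε ^ 2) ^ 3)

lemma sqrt_reg_pos {ε : ℝ} (hε : 0 < ε) (s : ℝ) : 0 < √(s ^ 2 + ε ^ 2) := by positivity

lemma hasDerivAt_sqrt_reg {ε : ℝ} (hε : 0 < ε) (s : ℝ) :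
    HasDerivAt (fun s => √(s ^ 2 + ε ^ 2)) (s / √(s ^ 2 + ε ^ 2)) s := by
  have h : HasDerivAt (fun s : ℝ => s ^ 2 + ε ^ 2) (2 * s) s := by
    simpa using (hasDerivAt_pow 2 s).add_const (ε ^ 2)
  convert h.sqrt (by positivity) using 1
  have := sqrt_reg_pos hε s
  field_simp

lemma hasDerivAt_regNeg {ε : ℝ} (hε : 0 < ε) (s : ℝ) :
    HasDerivAt (regNeg ε) (regNeg' ε s) s :=
  ((hasDerivAt_sqrt_reg hε s).sub (hasDerivAt_id s)).div_const 2

lemma hasDerivAt_regNeg' {ε : ℝ} (hε : 0 < ε) (s : ℝ) :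
    HasDerivAt (regNeg' ε) (regNeg'' ε s) s := by
  have hp := sqrt_reg_pos hε s
  have hsq : √(s ^ 2 + ε ^ 2) ^ 2 = s ^ 2 + ε ^ 2 := Real.sq_sqrt (by positivity)
  refine ((((hasDerivAt_id s).div (hasDerivAt_sqrt_reg hε s) hp.ne').sub_const
    1).div_const 2).congr_deriv ?_
  simp only [regNeg'', id]
  field_simp
  linarith

lemma continuous_regNeg (ε : ℝ) : Continuous (regNeg ε) := by
  unfold regNeg; fun_prop

lemma continuous_regNeg' {ε : ℝ} (hε : 0 < ε) : Continuous (regNeg' ε) :=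
  continuous_iff_continuousAt.2 fun s => (hasDerivAt_regNeg' hε s).continuousAt

lemma continuous_regNeg'' {ε : ℝ} (hε : 0 < ε) : Continuous (regNeg'' ε) := by
  unfold regNeg''
  refine continuous_const.div (by fun_prop) fun s => ?_
  have := sqrt_reg_pos hε s
  positivity

lemma max_neg_le_regNeg (ε s : ℝ) : max (-s) 0 ≤ regNeg ε s := by
  have h : |s| ≤ √(s ^ 2 + ε ^ 2) := Real.abs_le_sqrt (by nlinarith [sq_nonneg ε])
  have := le_abs_self s
  have := neg_abs_le s
  unfold regNeg
  apply max_le <;> linarith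

lemma regNeg_le {ε s : ℝ} (hε : 0 < ε) (hs : 0 ≤ s) : regNeg ε s ≤ ε := by
  have : √(s ^ 2 + ε ^ 2) ≤ s + ε := Real.sqrt_le_iff.2 ⟨by positivity, by nlinarith⟩
  unfold regNeg
  linarith

lemma abs_regNeg'_le {ε : ℝ} (hε : 0 < ε) (s : ℝ) : |regNeg' ε s| ≤ 1 := by
  have hp := sqrt_reg_pos hε s
  have h : |s| ≤ √(s ^ 2 + ε ^ 2) := Real.abs_le_sqrt (by nlinarith [sq_nonneg ε])
  have h1 : |s / √(s ^ 2 + ε ^ 2)| ≤ 1 := by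
    rw [abs_div, abs_of_pos hp]; exact (div_le_one hp).2 h
  rw [abs_le] at h1 ⊢
  unfold regNeg'
  constructor <;> linarith

/-- The error term of the energy identity, with `s = u`, `p = ∂ₓu`, `v = ∂ₓV`: complete the square
in `p`, then use `η''(s) s² ≤ ε`. -/
lemma neg_regNeg''_mul_le {ε : ℝ} (hε : 0 < ε) {s p v M : ℝ} (hv : |v| ≤ M) :
    -(regNeg'' ε s * p * (p + s * v)) ≤ ε * M ^ 2 := by
  have hp := sqrt_reg_pos hε s
  have hsq : √(s ^ 2 + ε ^ 2) ^ 2 = s ^ 2 + ε ^ 2 := Real.sq_sqrt (by positivity)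
  have h0 : 0 ≤ regNeg'' ε s := by unfold regNeg''; positivity
  have h1 : regNeg'' ε s * s ^ 2 ≤ ε := by
    unfold regNeg''
    have hle : ε ≤ √(s ^ 2 + ε ^ 2) := Real.le_sqrt_of_sq_le (by nlinarith [sq_nonneg s])
    set q := √(s ^ 2 + ε ^ 2)
    rw [div_mul_eq_mul_div, div_le_iff₀ (by positivity)]
    have a1 : s ^ 2 ≤ q ^ 2 := by nlinarith
    calc ε ^ 2 * s ^ 2 ≤ ε ^ 2 * q ^ 2 := by gcongr
      _ = ε * (ε * q ^ 2) := by ring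
      _ ≤ ε * (q * q ^ 2) := by gcongr
      _ ≤ ε * (2 * q ^ 3) := by nlinarith [mul_pos hε (pow_pos hp 3)]
  have hv2 : v ^ 2 ≤ M ^ 2 := sq_le_sq' (by linarith [(abs_le.1 hv).1]) (abs_le.1 hv).2
  calc -(regNeg'' ε s * p * (p + s * v))
      ≤ (regNeg'' ε s * s ^ 2) * v ^ 2 := by
        have : 0 ≤ regNeg'' ε s * ((p + s * v / 2) ^ 2 + 3 / 4 * (s * v) ^ 2) := by positivity
        nlinarith
    _ ≤ ε * M ^ 2 := by gcongr

/-- The bound on the negative part over `[-r, r]` before letting `ε → 0`; `G` is the flux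
`∂ₓU + U ∂ₓV` and the equation is encoded as `∂ₓG = ∂ₜU`. All functions are assumed continuous on
the whole plane, which is achieved later by freezing them in time outside `[0, T]`. -/
lemma reg_estimate {T : ℝ} {U Ut Ux Vx G : ℝ → ℝ → ℝ}
    (hU : Continuous fun p : ℝ × ℝ => U p.1 p.2)
    (hUt : Continuous fun p : ℝ × ℝ => Ut p.1 p.2)
    (hUx : Continuous fun p : ℝ × ℝ => Ux p.1 p.2)
    (hGc : Continuous fun p : ℝ × ℝ => G p.1 p.2)
    (hdt : ∀ t ∈ Ioo 0 T, ∀ x, HasDerivAt (fun s => U s x) (Ut t x) t)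
    (hdx : ∀ t ∈ Icc 0 T, ∀ x, HasDerivAt (U t) (Ux t x) x)
    (hGx : ∀ t ∈ Icc 0 T, ∀ x, HasDerivAt (G t) (Ut t x) x)
    (hG : ∀ t x, G t x = Ux t x + U t x * Vx t x)
    (h0 : ∀ x, 0 ≤ U 0 x)
    {t : ℝ} (ht : t ∈ Icc 0 T) {r M : ℝ} (hr : 0 < r)
    (hM : ∀ s ∈ Icc 0 T, ∀ x ∈ Icc (-r) r, |Vx s x| ≤ M) {ε : ℝ} (hε : 0 < ε) :
    ∫ x in -r..r, max (-U t x) 0 ≤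
      (∫ s in (0:ℝ)..t, (|G s r| + |G s (-r)|)) + ε * (2 * r + t * (2 * r * M ^ 2)) := by
  have hrr : -r ≤ r := by linarith
  have hUs : ∀ s, Continuous (U s) := fun s => hU.comp (Continuous.prodMk_right s)
  have hUts : ∀ s, Continuous (Ut s) := fun s => hUt.comp (Continuous.prodMk_right s)
  have hUxs : ∀ s, Continuous (Ux s) := fun s => hUx.comp (Continuous.prodMk_right s)
  have hGs : ∀ s, Continuous (G s) := fun s => hGc.comp (Continuous.prodMk_right s)
  have hGr : ∀ x, Continuous fun s => G s x := fun x => hGc.comp (Continuous.prodMk_left x)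
  have c0 := continuous_regNeg ε
  have c1 := continuous_regNeg' hε
  have c2 := continuous_regNeg'' hε
  have hW : Continuous fun p : ℝ × ℝ => regNeg' ε (U p.1 p.2) * Ut p.1 p.2 :=
    (c1.comp hU).mul hUt
  have htime : ∀ x, ∫ s in (0:ℝ)..t, regNeg' ε (U s x) * Ut s x =
      regNeg ε (U t x) - regNeg ε (U 0 x) := fun x => by
    refine integral_eq_sub_of_hasDerivAt_of_le ht.1
      (c0.comp (hU.comp (Continuous.prodMk_left x))).continuousOn (fun s hs => ?_)
      ((hW.comp (Continuous.prodMk_left x)).intervalIntegrable _ _)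
    exact (hasDerivAt_regNeg hε _).comp s (hdt s ⟨hs.1, hs.2.trans_le ht.2⟩ x)
  have hspace : ∀ s ∈ Icc 0 t, ∫ x in -r..r, regNeg' ε (U s x) * Ut s x ≤
      |G s r| + |G s (-r)| + ε * (2 * r * M ^ 2) := fun s hs => by
    have hs' : s ∈ Icc 0 T := ⟨hs.1, hs.2.trans ht.2⟩
    have hDc : Continuous fun x =>
        regNeg'' ε (U s x) * Ux s x * G s x + regNeg' ε (U s x) * Ut s x :=
      (((c2.comp (hUs s)).mul (hUxs s)).mul (hGs s)).add ((c1.comp (hUs s)).mul (hUts s))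
    have hD : ∫ x in -r..r, (regNeg'' ε (U s x) * Ux s x * G s x + regNeg' ε (U s x) * Ut s x) =
        regNeg' ε (U s r) * G s r - regNeg' ε (U s (-r)) * G s (-r) :=
      integral_eq_sub_of_hasDerivAt
        (fun x _ => ((hasDerivAt_regNeg' hε _).comp x (hdx s hs' x)).mul (hGx s hs' x))
        (hDc.intervalIntegrable _ _)
    have hb : ∀ x, |regNeg' ε (U s x) * G s x| ≤ |G s x| := fun x => by
      rw [abs_mul]
      exact mul_le_of_le_one_left (abs_nonneg _) (abs_regNeg'_le hε _)
    calc ∫ x in -r..r, regNeg' ε (U s x) * Ut s x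
        ≤ ∫ x in -r..r, ((regNeg'' ε (U s x) * Ux s x * G s x + regNeg' ε (U s x) * Ut s x)
            + ε * M ^ 2) := by
          refine integral_mono_on hrr (((c1.comp (hUs s)).mul (hUts s)).intervalIntegrable _ _)
            ((hDc.add continuous_const).intervalIntegrable _ _) fun x hx => ?_
          have := neg_regNeg''_mul_le hε (s := U s x) (p := Ux s x) (hM s hs' x hx)
          rw [hG s x]
          linarith
      _ = regNeg' ε (U s r) * G s r - regNeg' ε (U s (-r)) * G s (-r) + 2 * r * (ε * M ^ 2) := by
          rw [integral_add (hDc.intervalIntegrable _ _) intervalIntegrable_const, hD,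
            intervalIntegral.integral_const, smul_eq_mul]
          ring
      _ ≤ _ := by
          have := (le_abs_self _).trans (hb r)
          have := (neg_le_abs _).trans (hb (-r))
          linarith
  have hswap : ∫ x in -r..r, (regNeg ε (U t x) - regNeg ε (U 0 x)) =
      ∫ s in (0:ℝ)..t, ∫ x in -r..r, regNeg' ε (U s x) * Ut s x := by
    simp_rw [← htime]
    refine intervalIntegral_intervalIntegral_swap ?_
    have hcpt : IsCompact (uIcc (-r) r ×ˢ uIcc 0 t) := isCompact_uIcc.prod isCompact_uIcc
    exact ((hW.comp continuous_swap).continuousOn.integrableOn_compact hcpt).mono_set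
      (prod_mono uIoc_subset_uIcc uIoc_subset_uIcc)
  have hinit : ∫ x in -r..r, regNeg ε (U 0 x) ≤ 2 * r * ε := by
    calc _ ≤ ∫ x in -r..r, ε :=
          integral_mono_on hrr ((c0.comp (hUs 0)).intervalIntegrable _ _)
            intervalIntegrable_const fun x _ => regNeg_le hε (h0 x)
      _ = _ := by rw [intervalIntegral.integral_const, smul_eq_mul]; ring
  have hflux : Continuous fun s => |G s r| + |G s (-r)| := (hGr r).abs.add (hGr (-r)).abs
  calc ∫ x in -r..r, max (-U t x) 0 ≤ ∫ x in -r..r, regNeg ε (U t x) :=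
        integral_mono_on hrr (((hUs t).neg.max continuous_const).intervalIntegrable _ _)
          ((c0.comp (hUs t)).intervalIntegrable _ _) fun x _ => max_neg_le_regNeg ε _
    _ = (∫ x in -r..r, regNeg ε (U 0 x)) +
          ∫ s in (0:ℝ)..t, ∫ x in -r..r, regNeg' ε (U s x) * Ut s x := by
        have := integral_sub (μ := volume) ((c0.comp (hUs t)).intervalIntegrable (-r) r)
          ((c0.comp (hUs 0)).intervalIntegrable (-r) r)
        simp only [Function.comp_apply] at this
        rw [← hswap, this]
        ring
    _ ≤ 2 * r * ε + ∫ s in (0:ℝ)..t, (|G s r| + |G s (-r)| + ε * (2 * r * M ^ 2)) := by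
        gcongr
        refine integral_mono_on ht.1 ?_ ((hflux.add continuous_const).intervalIntegrable _ _) hspace
        exact (continuous_parametric_intervalIntegral_of_continuous' hW _ _).intervalIntegrable _ _
    _ = _ := by
        rw [integral_add (hflux.intervalIntegrable _ _) intervalIntegrable_const,
          intervalIntegral.integral_const, smul_eq_mul]
        ring

/-- The `L¹` norm of the negative part on `[-r, r]` grows at most by the flux through `±r`. -/
lemma flux_estimate {T : ℝ} {U Ut Ux Vx : ℝ → ℝ → ℝ}
    (hU : Continuous fun p : ℝ × ℝ => U p.1 p.2)
    (hUt : Continuous fun p : ℝ × ℝ => Ut p.1 p.2)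
    (hUx : Continuous fun p : ℝ × ℝ => Ux p.1 p.2)
    (hVx : Continuous fun p : ℝ × ℝ => Vx p.1 p.2)
    (hdt : ∀ t ∈ Ioo 0 T, ∀ x, HasDerivAt (fun s => U s x) (Ut t x) t)
    (hdx : ∀ t ∈ Icc 0 T, ∀ x, HasDerivAt (U t) (Ux t x) x)
    (hGx : ∀ t ∈ Icc 0 T, ∀ x,
      HasDerivAt (fun x => Ux t x + U t x * Vx t x) (Ut t x) x)
    (h0 : ∀ x, 0 ≤ U 0 x) {t : ℝ} (ht : t ∈ Icc 0 T) {r : ℝ} (hr : 0 < r) :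
    ∫ x in -r..r, max (-U t x) 0 ≤
      ∫ s in (0:ℝ)..t, (|Ux s r + U s r * Vx s r| + |Ux s (-r) + U s (-r) * Vx s (-r)|) := by
  obtain ⟨M, hM⟩ := (isCompact_Icc (a := (0:ℝ)) (b := T)).prod
    (isCompact_Icc (a := -r) (b := r)) |>.exists_bound_of_continuousOn hVx.continuousOn
  set K := 2 * r + t * (2 * r * M ^ 2)
  have hK : 0 < K := by have := ht.1; positivity
  refine le_of_forall_pos_le_add fun δ hδ => ?_
  have := reg_estimate (G := fun t x => Ux t x + U t x * Vx t x) hU hUt hUx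
    (hUx.add (hU.mul hVx)) hdt hdx hGx (fun _ _ => rfl) h0 ht hr
    (fun s hs x hx => hM (s, x) ⟨hs, hx⟩) (div_pos hδ hK)
  rwa [div_mul_cancel₀ _ hK.ne'] at this

/-- Lemma 4.3 (preservation of nonnegativity): if `u` is a classical solution on
`[0,T] × ℝ` of the transport–diffusion equation `∂ₜu = ∂ₓₓu + ∂ₓ(u ∂ₓV)`
(with `ut = ∂ₜu`, `ux = ∂ₓu`, `uxx = ∂ₓₓu`, `Vx = ∂ₓV`, `Vxx = ∂ₓₓV`), with
`u(t,·) ∈ L¹(ℝ)` for each `t` and `∂ₓu`, `∂ₓₓu`, `u∂ₓV`,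
`∂ₓu·∂ₓV + u·∂ₓₓV` square-integrable on `(0,T) × ℝ`, and if `u(0,·) ≥ 0`,
then `u ≥ 0` on `[0,T] × ℝ`. -/
theorem nonnegativity_preserved
    (T : ℝ) (hT : 0 < T)
    (u ut ux uxx V Vx Vxx : ℝ → ℝ → ℝ)
    (hu_cont : ContinuousOn (fun p : ℝ × ℝ => u p.1 p.2) (Icc 0 T ×ˢ univ))
    (hut_cont : ContinuousOn (fun p : ℝ × ℝ => ut p.1 p.2) (Icc 0 T ×ˢ univ))
    (hux_cont : ContinuousOn (fun p : ℝ × ℝ => ux p.1 p.2) (Icc 0 T ×ˢ univ))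
    (huxx_cont : ContinuousOn (fun p : ℝ × ℝ => uxx p.1 p.2) (Icc 0 T ×ˢ univ))
    (hVx_cont : ContinuousOn (fun p : ℝ × ℝ => Vx p.1 p.2) (Icc 0 T ×ˢ univ))
    (hVxx_cont : ContinuousOn (fun p : ℝ × ℝ => Vxx p.1 p.2) (Icc 0 T ×ˢ univ))
    (hut : ∀ t ∈ Icc (0:ℝ) T, ∀ x : ℝ,
      HasDerivWithinAt (fun s => u s x) (ut t x) (Icc 0 T) t)
    (hux : ∀ t ∈ Icc (0:ℝ) T, ∀ x : ℝ, HasDerivAt (fun ξ => u t ξ) (ux t x) x)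
    (huxx : ∀ t ∈ Icc (0:ℝ) T, ∀ x : ℝ, HasDerivAt (fun ξ => ux t ξ) (uxx t x) x)
    (hVx : ∀ t ∈ Icc (0:ℝ) T, ∀ x : ℝ, HasDerivAt (fun ξ => V t ξ) (Vx t x) x)
    (hVxx : ∀ t ∈ Icc (0:ℝ) T, ∀ x : ℝ, HasDerivAt (fun ξ => Vx t ξ) (Vxx t x) x)
    (hpde : ∀ t ∈ Icc (0:ℝ) T, ∀ x : ℝ,
      ut t x = uxx t x + (ux t x * Vx t x + u t x * Vxx t x))
    (hL1 : ∀ t ∈ Icc (0:ℝ) T, Integrable (u t))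
    (hux_L2 : IntegrableOn (fun p : ℝ × ℝ => (ux p.1 p.2)^2) (Ioo 0 T ×ˢ univ))
    (huxx_L2 : IntegrableOn (fun p : ℝ × ℝ => (uxx p.1 p.2)^2) (Ioo 0 T ×ˢ univ))
    (huVx_L2 : IntegrableOn (fun p : ℝ × ℝ => (u p.1 p.2 * Vx p.1 p.2)^2)
      (Ioo 0 T ×ˢ univ))
    (hdiv_L2 : IntegrableOn
      (fun p : ℝ × ℝ => (ux p.1 p.2 * Vx p.1 p.2 + u p.1 p.2 * Vxx p.1 p.2)^2)
      (Ioo 0 T ×ˢ univ))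
    (hu0 : ∀ x : ℝ, 0 ≤ u 0 x) :
    ∀ t ∈ Icc (0:ℝ) T, ∀ x : ℝ, 0 ≤ u t x := by
  intro t ht x₀
  by_contra! hneg
  -- Precomposing with the projection `c` of time onto `[0, T]` gives functions continuous on `ℝ × ℝ`.
  set c : ℝ → ℝ := fun s => max 0 (min s T)
  have hc : ∀ s ∈ Icc 0 T, c s = s := fun s hs => by
    simp only [c]; rw [min_eq_left hs.2, max_eq_right hs.1]
  have hcm : ∀ s, c s ∈ Icc 0 T := fun s =>
    ⟨le_max_left _ _, max_le hT.le (min_le_right _ _)⟩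
  have hcc : Continuous fun p : ℝ × ℝ => (c p.1, p.2) := by fun_prop
  have hext : ∀ {f : ℝ → ℝ → ℝ},
      ContinuousOn (fun p : ℝ × ℝ => f p.1 p.2) (Icc 0 T ×ˢ univ) →
      Continuous fun p : ℝ × ℝ => f (c p.1) p.2 := fun {f} hf =>
    hf.comp_continuous hcc fun p => ⟨hcm _, mem_univ _⟩
  have hGx : ∀ s ∈ Icc 0 T, ∀ x,
      HasDerivAt (fun x => ux s x + u s x * Vx s x) (ut s x) x := fun s hs x => by
    rw [hpde s hs x]
    exact (huxx s hs x).add ((hux s hs x).mul (hVxx s hs x))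
  have hest : ∀ r, 0 < r → ∫ x in -r..r, max (-u t x) 0 ≤
      ∫ s in (0:ℝ)..t, (|ux s r + u s r * Vx s r| + |ux s (-r) + u s (-r) * Vx s (-r)|) :=
      fun r hr => by
    have := flux_estimate (U := fun s => u (c s)) (Ut := fun s => ut (c s))
      (Ux := fun s => ux (c s)) (Vx := fun s => Vx (c s)) (hext hu_cont) (hext hut_cont)
      (hext hux_cont) (hext hVx_cont) (T := T)
      (fun s hs x => by
        have hs' := Ioo_subset_Icc_self hs
        rw [hc s hs']
        refine ((hut s hs' x).hasDerivAt (Icc_mem_nhds hs.1 hs.2)).congr_of_eventuallyEq ?_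
        filter_upwards [Icc_mem_nhds hs.1 hs.2] with y hy
        rw [hc y hy])
      (fun s _ x => hux _ (hcm s) x) (fun s _ x => hGx _ (hcm s) x)
      (fun x => by rw [hc 0 ⟨le_rfl, hT.le⟩]; exact hu0 x) ht hr
    rw [hc t ht] at this
    refine this.trans_eq (integral_congr fun s hs => ?_)
    rw [uIcc_of_le ht.1] at hs
    simp only [hc s ⟨hs.1, hs.2.trans ht.2⟩]
  have hnc : Continuous fun x => max (-u t x) 0 :=
    (continuous_iff_continuousAt.2 fun x => (hux t ht x).continuousAt).neg.max continuous_const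
  set r₀ := |x₀| + 1
  have hr₀ : 0 < r₀ := by positivity
  set A := ∫ x in -r₀..r₀, max (-u t x) 0
  have hA : 0 < A := by
    refine integral_pos (by linarith) hnc.continuousOn (fun _ _ => le_max_right _ _) ⟨x₀, ?_, ?_⟩
    · constructor
      · linarith [neg_abs_le x₀]
      · linarith [le_abs_self x₀]
    · exact lt_max_of_lt_left (by linarith)
  have hmono : ∀ r, r₀ ≤ r → A ≤ ∫ x in -r..r, max (-u t x) 0 := fun r hr =>
    integral_mono_interval (by linarith) (by linarith) hr
      (Filter.Eventually.of_forall fun _ => le_max_right _ _) (hnc.intervalIntegrable _ _)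
  set k : ℝ → ℝ → ℝ := fun s x => (ux s x) ^ 2 + (u s x * Vx s x) ^ 2
  have hkc : ContinuousOn (fun p : ℝ × ℝ => k p.1 p.2) (Icc 0 T ×ˢ univ) :=
    (hux_cont.pow 2).add ((hu_cont.mul hVx_cont).pow 2)
  have hk : Integrable (fun x => ∫ s in Ioo 0 T, k s x) := by
    have h := hux_L2.add huVx_L2
    rw [IntegrableOn, Measure.volume_eq_prod, ← Measure.prod_restrict, Measure.restrict_univ] at h
    exact h.integral_prod_right
  have hkH : Integrable fun r => (∫ s in Ioo 0 T, k s r) + ∫ s in Ioo 0 T, k s (-r) :=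
    hk.add hk.comp_neg
  -- The weight in Young's inequality: its constant term, integrated over `[0, T]`, costs `A / 2`.
  obtain ⟨δ, hδ, hδT⟩ : ∃ δ : ℝ, 0 < δ ∧ (T - 0) * δ = A / 2 :=
    ⟨A / (2 * T), by positivity, by field_simp; ring⟩
  have hlow : ∀ r ∈ Ioi r₀, A * δ / 2 ≤
      (∫ s in Ioo 0 T, k s r) + ∫ s in Ioo 0 T, k s (-r) := fun r hr => by
    have hci : ∀ {f : ℝ → ℝ → ℝ} (x : ℝ),
        ContinuousOn (fun p : ℝ × ℝ => f p.1 p.2) (Icc 0 T ×ˢ univ) →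
        ContinuousOn (fun s => f s x) (Icc 0 T) := fun x hf =>
      hf.comp (Continuous.prodMk_left x).continuousOn fun s hs => ⟨hs, mem_univ _⟩
    have hg := hux_cont.add (hu_cont.mul hVx_cont)
    have hconv : ∀ x, ∫ s in Ioo 0 T, k s x = ∫ s in (0:ℝ)..T, k s x := fun x => by
      rw [integral_of_le hT.le, integral_Ioc_eq_integral_Ioo]
    have hki : ∀ x, IntervalIntegrable (fun s => k s x) volume 0 T := fun x =>
      (hci x hkc).intervalIntegrable_of_Icc hT.le
    have hfi : IntervalIntegrable (fun s => |ux s r + u s r * Vx s r| +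
        |ux s (-r) + u s (-r) * Vx s (-r)|) volume 0 T :=
      ((hci (f := fun s x => ux s x + u s x * Vx s x) r hg).abs.add
        (hci (f := fun s x => ux s x + u s x * Vx s x) (-r) hg).abs).intervalIntegrable_of_Icc hT.le
    have hy : ∀ a b : ℝ, |a + b| ≤ δ / 2 + (a ^ 2 + b ^ 2) / δ := fun a b => by
      have h1 : 0 ≤ (|a + b| - δ) ^ 2 := sq_nonneg _
      have h2 := sq_abs (a + b)
      rw [← sub_le_iff_le_add', le_div_iff₀ hδ]
      nlinarith [sq_nonneg (a - b)]
    have h1 : A ≤ ∫ s in (0:ℝ)..T, (δ + (k s r + k s (-r)) / δ) := by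
      refine (hmono r hr.le).trans ((hest r (hr₀.trans hr)).trans ?_)
      refine (integral_mono_interval le_rfl ht.1 ht.2
        (Filter.Eventually.of_forall fun _ => by positivity) hfi).trans ?_
      refine integral_mono_on hT.le hfi
        (intervalIntegrable_const.add (((hki r).add (hki (-r))).div_const δ)) fun s _ => ?_
      have := hy (ux s r) (u s r * Vx s r)
      have := hy (ux s (-r)) (u s (-r) * Vx s (-r))
      simp only [k, add_div] at *
      linarith
    rw [integral_add intervalIntegrable_const (((hki r).add (hki (-r))).div_const δ),
      intervalIntegral.integral_div, integral_add (hki r) (hki (-r)),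
      intervalIntegral.integral_const, smul_eq_mul] at h1
    rw [hδT] at h1
    rw [hconv, hconv]
    have h3 := (le_div_iff₀ hδ).1 (sub_le_iff_le_add'.2 h1)
    linarith
  have hconst : IntegrableOn (fun _ : ℝ => A * δ / 2) (Ioi r₀) := by
    refine Integrable.mono' hkH.integrableOn aestronglyMeasurable_const ?_
    filter_upwards [ae_restrict_mem measurableSet_Ioi] with r hr
    rw [Real.norm_of_nonneg (by positivity)]
    exact hlow r hr
  rw [integrableOn_const_iff] at hconst
  rcases hconst with h | h
  · exact (show A * δ / 2 ≠ 0 by positivity) (by simpa using h)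
  · simp at h
end
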